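/- arXiv:2111.08780 — 3 statements merged into one kernel-verified Lean document; each statement's English description precedes it below -/
import Mathlib

section
/- There is a universal constant C > 0 such that for every real r ∈ (0, 1/2], setting h = ⌊1/(2r)⌋ and ε = h + 1 − 1/(2r), there exist infinitely many positive integers N for which some ORN design on N nodes guarantees throughput r and has maximum latency at most C · h · ((εN)^{1/h} + N^{1/(h+1)}). -/
/-!
The nodes are the vectors of `F_p^d` for a prime `p`, so `N = p^d`. Time is cut into phases of `p - 1`
slots; during phase `j` the slots translate by the nonzero multiples of the moment-curve point
`v(j) = (1, j, …, j^(d-1))`. Using one slot in some of the phases of a window of `Q` consecutive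
phases amounts to writing the displacement as a combination of `v(j), …, v(j+Q-1)`, with one hop
per nonzero coefficient.

*Routing* (`exists_design`). A message first travels to a uniformly random node and from there to
its destination. Each half is uniform whatever the demand, so a demand of throughput `r` loads an
edge by at most `2r` times the expected number of half-trips that use its timeslot.

*Uniform load* (`exists_design_of_coeffs`). Shifting the window acts on the moment curve by an
invertible linear map, so one distribution of patterns serves all windows. If the chosen
coefficients are homogeneous in the displacement, all slots of a phase are used equally often, and
throughput `r` is guaranteed as soon as the average number of nonzero coefficients is at
most `1/(2r) = h + 1 - ε`.

*Few hops.* If `ε ≥ 2^(-h)`, take `d = Q = h`: there are at most `h` hops and the latency is `O(h p)`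
(`exists_design_full`). If `ε < 2^(-h)`, take `d = h + 1` and use `h` hops for every displacement on
one of the `K = Q.choose h` hyperplanes spanned by `h` points of the window, and `h + 1` hops
otherwise (`exists_design_sparse`). Distinct hyperplanes meet in codimension two, so by Cauchy–Schwarz they
cover a fraction `K / (p + K)` of the space (`card_union_hyperplanes`), which is at least `ε` once
`K ≥ 2εp`. Since `K ≥ ((Q+1-h)/h)^h`, some `Q = O(h (εp)^(1/h))` suffices, and the latency is
`O(Q p) = O(h (εN)^(1/h))`.
-/

open scoped ENNReal

/-- A connection schedule of size `N` and period `T`: a `T`-periodic sequence of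
permutations of `[N]`, indexed by timeslots `t : ℤ`. -/
structure ConnSched (N T : ℕ) where
  Tpos : 0 < T
  perm : ℤ → Equiv.Perm (Fin N)
  periodic : ∀ t : ℤ, perm (t + T) = perm t

/-- A path in the virtual topology, encoded by its starting vertex together with the
list of its steps, where `true` denotes traversing the (unique) outgoing physical edge
and `false` denotes traversing the virtual edge. -/
structure ORNPath (N : ℕ) where
  start : Fin N × ℤ
  steps : List Bool

namespace ORNPath

variable {N T : ℕ}

/-- One step in the virtual topology: from vertex `v`, either follow the physical edge
(`b = true`) to `(π_t v.1, v.2 + 1)`, or the virtual edge (`b = false`) to `(v.1, v.2+1)`. -/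
def stepFn (S : ConnSched N T) (v : Fin N × ℤ) (b : Bool) : Fin N × ℤ :=
  (if b then S.perm v.2 v.1 else v.1, v.2 + 1)

/-- The final vertex of a path. -/
def dest (S : ConnSched N T) (P : ORNPath N) : Fin N × ℤ :=
  P.steps.foldl (stepFn S) P.start

/-- The latency of a path: the total number of (virtual or physical) edges it contains. -/
def latency (P : ORNPath N) : ℕ := P.steps.length

/-- The number of physical edges of a path. -/
def hops (P : ORNPath N) : ℕ := P.steps.count true

/-- The vertex of a path after `k` steps. -/
def vertexAt (S : ConnSched N T) (P : ORNPath N) (k : ℕ) : Fin N × ℤ :=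
  (P.steps.take k).foldl (stepFn S) P.start

/-- A physical edge of the virtual topology is identified by the pair
(sending node, timeslot); the receiving node is determined by the schedule.
`P.usesEdge S e` says that path `P` traverses the physical edge `e`. -/
def usesEdge (S : ConnSched N T) (P : ORNPath N) (e : Fin N × ℤ) : Prop :=
  ∃ k : Fin P.steps.length, P.steps.get k = true ∧ P.vertexAt S k.val = e

/-- Transpose a path by `s` timeslots. -/
def shift (P : ORNPath N) (s : ℤ) : ORNPath N :=
  ⟨(P.start.1, P.start.2 + s), P.steps⟩

end ORNPath

/-- The amount of flow that `f` sends across the physical edge `e`. -/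
noncomputable def edgeFlow {N T : ℕ} (S : ConnSched N T) (f : ORNPath N → ℝ≥0∞)
    (e : Fin N × ℤ) : ℝ≥0∞ :=
  ∑' P : {P : ORNPath N // P.usesEdge S e}, f P.val

/-- A flow is feasible if it places at most one unit of flow on every physical edge. -/
def Feasible {N T : ℕ} (S : ConnSched N T) (f : ORNPath N → ℝ≥0∞) : Prop :=
  ∀ e : Fin N × ℤ, edgeFlow S f e ≤ 1

/-- An ORN design: a connection schedule together with an oblivious routing scheme.
`route a b t` is a unit flow supported on paths from `(a,t)` to the timeline of `b`,
periodic with period `T`. -/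
structure ORNDesign (N T : ℕ) where
  sched : ConnSched N T
  route : Fin N → Fin N → ℤ → ORNPath N → ℝ≥0∞
  route_support : ∀ a b t P, route a b t P ≠ 0 →
    P.start = (a, t) ∧ (P.dest sched).1 = b
  route_unit : ∀ a b t, ∑' P : ORNPath N, route a b t P = 1
  route_periodic : ∀ a b t P, route a b (t + T) (P.shift T) = route a b t P

/-- A demand function `D` (assigning to each timeslot an `N × N` matrix of nonnegative
reals) requests throughput `r` if all row and column sums of every `D t` are at most `r`. -/
def RequestsThroughput {N : ℕ} (D : ℤ → Fin N → Fin N → ℝ) (r : ℝ) : Prop :=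
  (∀ t a b, 0 ≤ D t a b) ∧ (∀ t a, ∑ b, D t a b ≤ r) ∧ (∀ t b, ∑ a, D t a b ≤ r)

/-- The flow induced by routing the demand `D` with the routing scheme of `R`. -/
noncomputable def inducedFlow {N T : ℕ} (R : ORNDesign N T)
    (D : ℤ → Fin N → Fin N → ℝ) (P : ORNPath N) : ℝ≥0∞ :=
  ∑' x : Fin N × Fin N × ℤ,
    ENNReal.ofReal (D x.2.2 x.1 x.2.1) * R.route x.1 x.2.1 x.2.2 P

/-- An ORN design guarantees throughput `r` if the induced flow is feasible for every
demand function requesting throughput at most `r`. -/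
def GuaranteesThroughput {N T : ℕ} (R : ORNDesign N T) (r : ℝ) : Prop :=
  ∀ D : ℤ → Fin N → Fin N → ℝ, RequestsThroughput D r →
    Feasible R.sched (inducedFlow R D)

/-- The maximum latency of the ORN design `R` is at most `L`: every path carrying a
positive amount of flow has latency at most `L`. -/
def MaxLatencyLE {N T : ℕ} (R : ORNDesign N T) (L : ℕ) : Prop :=
  ∀ a b t P, R.route a b t P ≠ 0 → P.latency ≤ L


/-! ### Translation schedules and two-stage routing -/

/-- The weight of a demand against the labels that use a given edge, when a label `c` in `S` uses
the edge only for the single origin `e (w c)`: each such label contributes at most one row sum.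
Applied to the transposed demand, it bounds the weight when the destination is determined instead. -/
lemma weighted_count_le {G ι κ : Type*} [Fintype G] [DecidableEq G] 
    [Fintype ι] [Fintype κ] (e : G ≃ ι) (d : ι → κ → ℝ≥0∞) (ρ : ℝ≥0∞)
    (hd : ∀ i, ∑ j, d i j ≤ ρ) (S : G → Prop) [DecidablePred S] (w : G → G) :
    ∑ i, ∑ j, d i j * ((Finset.univ.filter fun c => S c ∧ e.symm i = w c).card : ℝ≥0∞)
      ≤ ρ * ((Finset.univ.filter S).card : ℝ≥0∞) := by
  have h1 : ∀ i, ∑ j, d i j * ((Finset.univ.filter fun c => S c ∧ e.symm i = w c).card : ℝ≥0∞)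
      ≤ ρ * ((Finset.univ.filter fun c => S c ∧ e.symm i = w c).card : ℝ≥0∞) := fun i => by
    rw [← Finset.sum_mul]
    gcongr
    exact hd i
  refine (Finset.sum_le_sum fun i _ => h1 i).trans ?_
  rw [← Finset.mul_sum]
  gcongr
  rw [← Nat.cast_sum]
  gcongr
  rw [← Finset.card_biUnion]
  · refine Finset.card_le_card fun c hc => ?_
    simp only [Finset.mem_biUnion, Finset.mem_filter, Finset.mem_univ, true_and] at hc ⊢
    exact hc.choose_spec.1
  · intro i _ j _ hij
    rw [Function.onFun, Finset.disjoint_left]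
    intro c hc hc'
    simp only [Finset.mem_filter, Finset.mem_univ, true_and] at hc hc'
    exact hij (e.symm.injective (hc.2.trans hc'.2.symm))

section Translation

variable {G : Type*} [AddCommGroup G] {N T : ℕ}

/-- The displacement accumulated in the first `n` steps of a path that leaves at time `t` and
takes the physical edge in step `k` exactly when `F k`, if the physical edge at time `u` translates
by `g u`. -/
def partialDisp (g : ℤ → G) (t : ℤ) (F : ℕ → Bool) (n : ℕ) : G :=
  ∑ k ∈ Finset.range n, if F k then g (t + k) else 0

/-- The schedule on `N = |G|` nodes whose permutation at time `t` is translation by `g t`; the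
bijection `e` names the elements of `G` by `[N]`. -/
def translationSched (e : G ≃ Fin N) (hT : 0 < T) (g : ℤ → G) (hg : ∀ t, g (t + T) = g t) :
    ConnSched N T where
  Tpos := hT
  perm t := (e.symm.trans (Equiv.addRight (g t))).trans e
  periodic t := by rw [hg]

/-- The path leaving `a` at time `t`, of length `n`, with step pattern `F`. -/
def patternPath (a : Fin N) (t : ℤ) (n : ℕ) (F : ℕ → Bool) : ORNPath N :=
  ⟨(a, t), (List.range n).map F⟩

lemma foldl_pattern (e : G ≃ Fin N) (hT : 0 < T) (g : ℤ → G) (hg : ∀ t, g (t + T) = g t)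
    (a : Fin N) (t : ℤ) (F : ℕ → Bool) (n : ℕ) :
    ((List.range n).map F).foldl (ORNPath.stepFn (translationSched e hT g hg)) (a, t)
      = (e (e.symm a + partialDisp g t F n), t + n) := by
  induction n with
  | zero => simp [partialDisp]
  | succ n ih =>
    rw [List.range_succ, List.map_append, List.foldl_append, ih]
    simp only [List.map_cons, List.map_nil, List.foldl_cons, List.foldl_nil, ORNPath.stepFn,
      translationSched, partialDisp, Finset.sum_range_succ]
    cases F n <;> simp [add_assoc]

lemma usesEdge_patternPath (e : G ≃ Fin N) (hT : 0 < T) (g : ℤ → G)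
    (hg : ∀ t, g (t + T) = g t) (a : Fin N) (t : ℤ) (F : ℕ → Bool) (n : ℕ) (v : Fin N) (τ : ℤ)
    (hu : (patternPath a t n F).usesEdge (translationSched e hT g hg) (v, τ)) :
    ∃ k < n, t = τ - k ∧ F k = true ∧ e.symm a + partialDisp g t F k = e.symm v := by
  obtain ⟨⟨k, hk⟩, h1, h2⟩ := hu
  have hk' : k < n := by simpa [patternPath] using hk
  simp only [patternPath, ORNPath.vertexAt] at h1 h2
  rw [← List.map_take, List.take_range, min_eq_left hk'.le, foldl_pattern] at h2
  refine ⟨k, hk', ?_, by simpa using h1, ?_⟩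
  · have := congrArg Prod.snd h2
    simp only at this
    linarith
  · have := congrArg Prod.fst h2
    simp only at this
    rw [← this]; simp

/-- The pattern of a two-stage path: `F` during the first `L` steps and `F'` afterwards. -/
def joinPattern (L : ℕ) (F F' : ℕ → Bool) (k : ℕ) : Bool := if k < L then F k else F' (k - L)

lemma partialDisp_join_of_le (g : ℤ → G) (t : ℤ) (L : ℕ) (F F' : ℕ → Bool) {k : ℕ} (hk : k ≤ L) :
    partialDisp g t (joinPattern L F F') k = partialDisp g t F k := by
  unfold partialDisp
  refine Finset.sum_congr rfl fun j hj => ?_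
  have : j < L := (Finset.mem_range.1 hj).trans_le hk
  simp [joinPattern, this]

lemma partialDisp_join_add (g : ℤ → G) (t : ℤ) (L : ℕ) (F F' : ℕ → Bool) (k : ℕ) :
    partialDisp g t (joinPattern L F F') (L + k)
      = partialDisp g t F L + partialDisp g (t + L) F' k := by
  rw [← partialDisp_join_of_le g t L F F' le_rfl]
  unfold partialDisp
  rw [Finset.sum_range_add]
  congr 1
  refine Finset.sum_congr rfl fun j _ => ?_
  simp [joinPattern, add_assoc]

variable [Fintype G]

/-- **Two-stage routing.** Let `B t c` be a pattern of length `L` for each start time `t` and each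
label `c ∈ G`, such that for fixed `t` the displacement is a bijective function of `c`. Routing
first along a uniformly random pattern and then along the pattern that completes the trip
costs every edge at time `τ` at most `2r` times the expected number of patterns using time `τ`,
because either half of the trip is uniformly distributed independently of the demand. -/
theorem exists_design (e : G ≃ Fin N) (hT : 0 < T) (g : ℤ → G) (hg : ∀ t, g (t + T) = g t)
    (L : ℕ) (B : ℤ → G → ℕ → Bool) (hB : ∀ t, B (t + T) = B t)
    (hbij : ∀ t, Function.Bijective fun c => partialDisp g t (B t c) L)
    (r : ℝ) (hr : 0 < r)
    (hload : ∀ τ : ℤ, 2 * r * (∑ k ∈ Finset.range L,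
      (Finset.univ.filter fun c => B (τ - k) c k = true).card : ℕ) ≤ N) :
    ∃ R : ORNDesign N T, GuaranteesThroughput R r ∧
      ∀ a b t P, R.route a b t P ≠ 0 → P.latency ≤ 2 * L := by
  classical
  let S := translationSched e hT g hg
  let E : ℤ → G ≃ G := fun t => Equiv.ofBijective _ (hbij t)
  have hE : ∀ t c, E t c = partialDisp g t (B t c) L := fun t c => rfl
  have hcard : Fintype.card G = N := by simpa using Fintype.card_congr e
  have hNpos : 0 < N := by rw [← hcard]; exact Fintype.card_pos
  -- `Q a b t` sends the label of the first stage to the label of the second stage.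
  let Q : Fin N → Fin N → ℤ → G ≃ G := fun a b t =>
    ((E t).trans (Equiv.subLeft (e.symm b - e.symm a))).trans (E (t + L)).symm
  have hQ : ∀ a b t c, e.symm a + E t c + E (t + L) (Q a b t c) = e.symm b := by
    intro a b t c; simp [Q]
  let pat : Fin N → Fin N → ℤ → G → ℕ → Bool := fun a b t c =>
    joinPattern L (B t c) (B (t + L) (Q a b t c))
  let path : Fin N → Fin N → ℤ → G → ORNPath N := fun a b t c =>
    patternPath a t (L + L) (pat a b t c)
  have hEper : ∀ t, E (t + T) = E t := by
    intro t; ext c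
    rw [hE, hE, hB]
    unfold partialDisp
    refine Finset.sum_congr rfl fun k _ => ?_
    rw [show t + (T : ℤ) + k = t + k + T by ring, hg]
  have hpathper : ∀ a b t c, path a b (t + T) c = (path a b t c).shift T := by
    intro a b t c
    have e1 : t + (T : ℤ) + L = t + L + T := by ring
    have hQper : Q a b (t + T) = Q a b t := by
      simp only [Q, hEper, e1]
    simp only [path, pat, patternPath, ORNPath.shift, hQper, hB, e1]
  have hshift_inj : Function.Injective fun P : ORNPath N => P.shift T := by
    rintro ⟨⟨a, t⟩, l⟩ ⟨⟨a', t'⟩, l'⟩ h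
    simp only [ORNPath.shift, ORNPath.mk.injEq, Prod.mk.injEq, add_left_inj] at h
    simp [h]
  let route : Fin N → Fin N → ℤ → ORNPath N → ℝ≥0∞ := fun a b t P =>
    ∑ c : G, if P = path a b t c then (N : ℝ≥0∞)⁻¹ else 0
  have hroute_ne : ∀ a b t P, route a b t P ≠ 0 → ∃ c, P = path a b t c := by
    intro a b t P h
    by_contra hne
    push Not at hne
    exact h (Finset.sum_eq_zero fun c _ => if_neg (hne c))
  let R : ORNDesign N T :=
    { sched := S
      route := route
      route_support := by
        intro a b t P h
        obtain ⟨c, rfl⟩ := hroute_ne a b t P h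
        refine ⟨rfl, ?_⟩
        simp only [ORNPath.dest, path, patternPath, S, foldl_pattern, pat, partialDisp_join_add,
          ← hE, ← add_assoc, hQ]
        simp
      route_unit := by
        intro a b t
        simp only [route]
        rw [Summable.tsum_finsetSum (fun _ _ => ENNReal.summable)]
        simp only [tsum_ite_eq, Finset.sum_const, Finset.card_univ, hcard, nsmul_eq_mul]
        exact ENNReal.mul_inv_cancel (by exact_mod_cast hNpos.ne') (by simp)
      route_periodic := by
        intro a b t P
        simp only [route]
        refine Finset.sum_congr rfl fun c _ => ?_
        rw [hpathper]
        simp only [hshift_inj.eq_iff] }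
  refine ⟨R, ?_, ?_⟩
  swap
  · intro a b t P h
    obtain ⟨c, rfl⟩ := hroute_ne a b t P h
    simp [path, patternPath, ORNPath.latency, two_mul]
  rintro D ⟨hD0, hDrow, hDcol⟩ ⟨v, τ⟩
  set d : ℤ → Fin N → Fin N → ℝ≥0∞ := fun t a b => ENNReal.ofReal (D t a b) with hd
  have hrow : ∀ t a, ∑ b, d t a b ≤ ENNReal.ofReal r := fun t a => by
    rw [hd, ← ENNReal.ofReal_sum_of_nonneg fun b _ => hD0 t a b]
    exact ENNReal.ofReal_le_ofReal (hDrow t a)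
  have hcol : ∀ t b, ∑ a, d t a b ≤ ENNReal.ofReal r := fun t b => by
    rw [hd, ← ENNReal.ofReal_sum_of_nonneg fun a _ => hD0 t a b]
    exact ENNReal.ofReal_le_ofReal (hDcol t b)
  -- `W a b t k` is the number of labels whose path takes the physical edge out of `v` in step `k`.
  let W : Fin N → Fin N → ℤ → ℕ → ℕ := fun a b t k => (Finset.univ.filter fun c =>
    pat a b t c k = true ∧ e.symm a + partialDisp g t (pat a b t c) k = e.symm v).card
  have hroute_edge : ∀ a b t, ∑' P : {P : ORNPath N // P.usesEdge S (v, τ)}, route a b t P.val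
      ≤ ∑ k ∈ Finset.range (L + L), if t = τ - k then (W a b t k : ℝ≥0∞) * (N : ℝ≥0∞)⁻¹ else 0 := by
    intro a b t
    simp only [route]
    rw [Summable.tsum_finsetSum (fun _ _ => ENNReal.summable)]
    have h1 : ∀ c, (∑' P : {P : ORNPath N // P.usesEdge S (v, τ)},
        if P.val = path a b t c then (N : ℝ≥0∞)⁻¹ else 0)
        ≤ ∑ k ∈ Finset.range (L + L), if t = τ - k then
          (if pat a b t c k = true ∧ e.symm a + partialDisp g t (pat a b t c) k = e.symm v
            then (N : ℝ≥0∞)⁻¹ else 0) else 0 := by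
      intro c
      by_cases hu : (path a b t c).usesEdge S (v, τ)
      · obtain ⟨k, hk, ht, h2⟩ := usesEdge_patternPath e hT g hg a t (pat a b t c) (L + L) v τ hu
        calc _ ≤ ∑' P : ORNPath N, if P = path a b t c then (N : ℝ≥0∞)⁻¹ else 0 :=
              ENNReal.tsum_comp_le_tsum_of_injective Subtype.val_injective _
          _ = (N : ℝ≥0∞)⁻¹ := by simp
          _ = if t = τ - k then (if pat a b t c k = true ∧
                e.symm a + partialDisp g t (pat a b t c) k = e.symm v
                then (N : ℝ≥0∞)⁻¹ else 0) else 0 := by rw [if_pos ht, if_pos h2]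
          _ ≤ _ := Finset.single_le_sum (f := fun k : ℕ => if t = τ - k then
              (if pat a b t c k = true ∧
                e.symm a + partialDisp g t (pat a b t c) k = e.symm v
                then (N : ℝ≥0∞)⁻¹ else 0) else 0) (fun _ _ => zero_le) (Finset.mem_range.2 hk)
      · rw [ENNReal.tsum_eq_zero.2]
        · exact zero_le
        · rintro ⟨P, hP⟩
          refine if_neg ?_
          rintro rfl
          exact hu hP
    refine (Finset.sum_le_sum fun c _ => h1 c).trans ?_
    rw [Finset.sum_comm]
    refine Finset.sum_le_sum fun k _ => ?_
    by_cases ht : t = τ - k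
    · simp only [if_pos ht]
      rw [← Finset.sum_filter, Finset.sum_const, nsmul_eq_mul]
    · simp [ht]
  have hstep : edgeFlow R.sched (inducedFlow R D) (v, τ)
      ≤ ∑ k ∈ Finset.range (L + L), (∑ a, ∑ b, d (τ - k) a b * (W a b (τ - k) k : ℝ≥0∞))
        * (N : ℝ≥0∞)⁻¹ := by
    calc edgeFlow R.sched (inducedFlow R D) (v, τ)
        = ∑' x : Fin N × Fin N × ℤ, d x.2.2 x.1 x.2.1 *
          ∑' P : {P : ORNPath N // P.usesEdge S (v, τ)}, route x.1 x.2.1 x.2.2 P.val := by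
          unfold edgeFlow inducedFlow
          rw [ENNReal.tsum_comm]
          refine tsum_congr fun x => ?_
          rw [ENNReal.tsum_mul_left]
      _ ≤ ∑' x : Fin N × Fin N × ℤ, ∑ k ∈ Finset.range (L + L),
          if x.2.2 = τ - k then d x.2.2 x.1 x.2.1 *
            ((W x.1 x.2.1 x.2.2 k : ℝ≥0∞) * (N : ℝ≥0∞)⁻¹) else 0 := by
          refine ENNReal.tsum_le_tsum fun x => ?_
          refine (mul_le_mul_right (hroute_edge _ _ _) _).trans ?_
          rw [Finset.mul_sum]
          refine Finset.sum_le_sum fun k _ => ?_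
          rw [mul_ite, mul_zero]
      _ = _ := by
          rw [Summable.tsum_finsetSum (fun _ _ => ENNReal.summable)]
          refine Finset.sum_congr rfl fun k _ => ?_
          rw [ENNReal.tsum_prod', tsum_fintype, Finset.sum_mul]
          refine Finset.sum_congr rfl fun a _ => ?_
          rw [ENNReal.tsum_prod', tsum_fintype, Finset.sum_mul]
          refine Finset.sum_congr rfl fun b _ => ?_
          simp only
          rw [tsum_eq_single (τ - k) (fun t ht => if_neg ht), if_pos rfl, mul_assoc]
  -- In the first stage the pattern is independent of the destination,
  have hfirst : ∀ k < L, ∑ a, ∑ b, d (τ - k) a b * (W a b (τ - k) k : ℝ≥0∞)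
      ≤ ENNReal.ofReal r *
        ((Finset.univ.filter fun c => B (τ - k) c k = true).card : ℝ≥0∞) := by
    intro k hk
    refine le_trans (le_of_eq ?_) (weighted_count_le e (d (τ - k)) _ (hrow _)
      (fun c => B (τ - k) c k = true)
      (fun c => e.symm v - partialDisp g (τ - k) (B (τ - k) c) k))
    refine Finset.sum_congr rfl fun a _ => Finset.sum_congr rfl fun b _ => ?_
    congr 2
    refine congrArg Finset.card ?_
    ext c
    simp only [Finset.mem_filter, Finset.mem_univ, true_and, pat]
    rw [partialDisp_join_of_le _ _ _ _ _ hk.le, joinPattern, if_pos hk, eq_sub_iff_add_eq]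
  -- and in the second stage it is independent of the origin.
  have hsecond : ∀ k < L, ∑ a, ∑ b, d (τ - (L + k : ℕ)) a b *
      (W a b (τ - (L + k : ℕ)) (L + k) : ℝ≥0∞)
      ≤ ENNReal.ofReal r *
        ((Finset.univ.filter fun c => B (τ - k) c k = true).card : ℝ≥0∞) := by
    intro k hk
    rw [Finset.sum_comm]
    refine le_trans (le_of_eq ?_) (weighted_count_le e (fun b a => d (τ - (L + k : ℕ)) a b) _
      (hcol _) (fun c => B (τ - k) c k = true)
      (fun c => e.symm v - partialDisp g (τ - k) (B (τ - k) c) k + E (τ - k) c))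
    refine Finset.sum_congr rfl fun b _ => Finset.sum_congr rfl fun a _ => ?_
    congr 2
    have ht : τ - (L + k : ℕ) + (L : ℤ) = τ - k := by push_cast; ring
    refine Finset.card_equiv (Q a b (τ - (L + k : ℕ))) fun c => ?_
    have hq := hQ a b (τ - (L + k : ℕ)) c
    simp only [Finset.mem_filter, Finset.mem_univ, true_and, pat, partialDisp_join_add, ← hE]
    rw [ht] at hq ⊢
    have h1 : joinPattern L (B (τ - (L + k : ℕ)) c)
        (B (τ - k) (Q a b (τ - (L + k : ℕ)) c)) (L + k)
        = B (τ - k) (Q a b (τ - (L + k : ℕ)) c) k := by simp [joinPattern]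
    rw [h1]
    refine and_congr_right fun _ => ?_
    rw [← hq]
    constructor
    · intro h
      rw [← h]; abel
    · intro h
      have h2 := add_right_cancel h
      rw [eq_sub_iff_add_eq] at h2
      rw [← h2]; abel
  refine hstep.trans ?_
  rw [← Finset.sum_mul, Finset.sum_range_add]
  have hsum := add_le_add (Finset.sum_le_sum fun k hk => hfirst k (Finset.mem_range.1 hk))
    (Finset.sum_le_sum fun k hk => hsecond k (Finset.mem_range.1 hk))
  refine (mul_le_mul_left hsum _).trans ?_
  rw [← Finset.mul_sum, ← two_mul, ← Nat.cast_sum]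
  rw [← div_eq_mul_inv]
  refine ENNReal.div_le_of_le_mul ?_
  rw [one_mul, ← mul_assoc]
  have h2 := ENNReal.ofReal_le_ofReal (hload τ)
  rw [ENNReal.ofReal_mul (by positivity), ENNReal.ofReal_mul (by norm_num), ENNReal.ofReal_natCast,
    ENNReal.ofReal_natCast] at h2
  simpa using h2

end Translation

/-! ### The moment-curve schedule -/

section MomentCurve

variable {p : ℕ} [Fact p.Prime]

/-- The scale of timeslot `u`: within each phase of `p - 1` timeslots it runs over `1, …, p - 1`. -/
def slotScale (p : ℕ) (u : ℤ) : ZMod p := ((u % ((p - 1 : ℕ) : ℤ) + 1 : ℤ) : ZMod p)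

/-- The point `(1, x, x², …, x^(d-1))` of the moment curve. -/
def moment (p d : ℕ) (x : ℤ) : Fin d → ZMod p := fun m => (x : ZMod p) ^ (m : ℕ)

lemma pred_pos_int : (0 : ℤ) < ((p - 1 : ℕ) : ℤ) := by
  have := (Fact.out : p.Prime).two_le
  omega

lemma cast_ne_zero_of_lt {z : ℤ} (h0 : 0 < z) (hp : z < p) : ((z : ℤ) : ZMod p) ≠ 0 := by
  rw [Ne, ZMod.intCast_zmod_eq_zero_iff_dvd]
  exact fun h => absurd (Int.le_of_dvd h0 h) (by omega)

lemma slotScale_ne_zero (u : ℤ) : slotScale p u ≠ 0 := by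
  have hq := pred_pos_int (p := p)
  have h1 := Int.emod_nonneg u hq.ne'
  have h2 := Int.emod_lt_of_pos u hq
  exact cast_ne_zero_of_lt (by omega) (by omega)

lemma slotScale_inj {u w : ℤ} (h : slotScale p u = slotScale p w) :
    u % ((p - 1 : ℕ) : ℤ) = w % ((p - 1 : ℕ) : ℤ) := by
  have hq := pred_pos_int (p := p)
  have h1 := Int.emod_nonneg u hq.ne'
  have h2 := Int.emod_lt_of_pos u hq
  have h3 := Int.emod_nonneg w hq.ne'
  have h4 := Int.emod_lt_of_pos w hq
  unfold slotScale at h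
  rw [ZMod.intCast_eq_intCast_iff_dvd_sub] at h
  have := Int.eq_zero_of_abs_lt_dvd h (by rw [abs_lt]; omega)
  omega

lemma slotScale_surj {x : ZMod p} (hx : x ≠ 0) (j : ℤ) :
    ∃ u : ℤ, u / ((p - 1 : ℕ) : ℤ) = j ∧ slotScale p u = x := by
  have hq := pred_pos_int (p := p)
  have h1 : 0 < x.val := Nat.pos_of_ne_zero (by rwa [Ne, ZMod.val_eq_zero])
  have h2 := ZMod.val_lt x
  refine ⟨(x.val - 1) + j * ((p - 1 : ℕ) : ℤ), ?_, ?_⟩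
  · rw [Int.add_mul_ediv_right _ _ hq.ne', Int.ediv_eq_zero_of_lt (by omega) (by omega), zero_add]
  · unfold slotScale
    rw [Int.add_mul_emod_self_right, Int.emod_eq_of_lt (by omega) (by omega)]
    simp

/-- Decomposing a vector along a translated window of the moment curve is injective: translation of
the parameter acts on the moment curve by an invertible linear map, given by the binomial theorem. -/
lemma moment_shift_injective {d Q : ℕ} (a b : ℤ → ZMod p) (j : ℤ)
    (h : ∑ i ∈ Finset.Ico (0 : ℤ) Q, a i • moment p d (j + i)
      = ∑ i ∈ Finset.Ico (0 : ℤ) Q, b i • moment p d (j + i)) :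
    ∑ i ∈ Finset.Ico (0 : ℤ) Q, a i • moment p d i
      = ∑ i ∈ Finset.Ico (0 : ℤ) Q, b i • moment p d i := by
  have key : ∀ f : ℤ → ZMod p, ∀ m : Fin d,
      (∑ i ∈ Finset.Ico (0 : ℤ) Q, f i • moment p d i) m
      = ∑ l ∈ Finset.range (m + 1), (∑ i ∈ Finset.Ico (0 : ℤ) Q, f i * ((j + i : ℤ) : ZMod p) ^ l)
          * ((-j : ZMod p) ^ ((m : ℕ) - l) * ((m : ℕ).choose l : ZMod p)) := by
    intro f m
    simp only [Finset.sum_apply, Pi.smul_apply, moment, smul_eq_mul, Finset.sum_mul]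
    rw [Finset.sum_comm]
    refine Finset.sum_congr rfl fun i _ => ?_
    have : (i : ZMod p) = ((j + i : ℤ) : ZMod p) + (-j : ZMod p) := by push_cast; ring
    rw [this, add_pow, Finset.mul_sum]
    refine Finset.sum_congr rfl fun l _ => ?_
    ring
  ext m
  rw [key, key]
  refine Finset.sum_congr rfl fun l hl => ?_
  congr 1
  have hl' : l < d := by have := Finset.mem_range.1 hl; omega
  simpa [moment] using congrFun h ⟨l, hl'⟩

/-- Phase `j` of the schedule translates by the multiples of the moment-curve point with parameter
`j mod p`, and a path that starts at time `t` begins to use physical edges in phase `t / (p-1) + 1`.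
If `φ` decomposes every vector over a window of `Q` phases, homogeneously, then
the patterns it yields load every edge by the average number of nonzero coefficients:
homogeneity spreads the load evenly over the `p - 1` timeslots of a phase. -/
theorem exists_design_of_coeffs (d Q : ℕ) (φ : (Fin d → ZMod p) → ℤ → ZMod p)
    (hsupp : ∀ c i, φ c i ≠ 0 → i ∈ Finset.Ico (0 : ℤ) Q)
    (hsmul : ∀ u : ZMod p, u ≠ 0 → ∀ c i, φ (u • c) i = u * φ c i)
    (hrep : ∀ c, ∑ i ∈ Finset.Ico (0 : ℤ) Q, φ c i • moment p d i = c)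
    (r : ℝ) (hr : 0 < r)
    (hcost : 2 * r * (∑ c, ((Finset.Ico (0 : ℤ) Q).filter fun i => φ c i ≠ 0).card : ℕ)
      ≤ (p ^ d : ℕ)) :
    ∃ (T : ℕ) (R : ORNDesign (p ^ d) T), GuaranteesThroughput R r ∧
      ∀ a b t P, R.route a b t P ≠ 0 → P.latency ≤ 2 * ((Q + 1) * (p - 1)) := by
  have hp := (Fact.out : p.Prime)
  have hq := pred_pos_int (p := p)
  have hcardG : Fintype.card (Fin d → ZMod p) = p ^ d := by simp [ZMod.card]
  set q : ℤ := ((p - 1 : ℕ) : ℤ) with hqdef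
  let g : ℤ → Fin d → ZMod p := fun u => slotScale p u • moment p d (u / q)
  let B : ℤ → (Fin d → ZMod p) → ℕ → Bool := fun t c k =>
    decide (φ c ((t + k) / q - (t / q + 1)) = slotScale p (t + k))
  have hdiv : ∀ t : ℤ, (t + (p * (p - 1) : ℕ)) / q = t / q + p := fun t => by
    push_cast [hqdef]
    rw [Int.add_mul_ediv_right _ _ hq.ne']
  have hscale : ∀ t : ℤ, slotScale p (t + (p * (p - 1) : ℕ)) = slotScale p t := fun t => by
    unfold slotScale
    push_cast
    rw [Int.add_mul_emod_self_right]
  have hdisp : ∀ t c, partialDisp g t (B t c) ((Q + 1) * (p - 1))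
      = ∑ i ∈ Finset.Ico (0 : ℤ) Q, φ c i • moment p d (t / q + 1 + i) := by
    intro t c
    have hR : ∑ i ∈ Finset.Ico (0 : ℤ) Q, φ c i • moment p d (t / q + 1 + i)
        = ∑ i ∈ (Finset.Ico (0 : ℤ) Q).filter (fun i => φ c i ≠ 0),
          φ c i • moment p d (t / q + 1 + i) := by
      rw [Finset.sum_filter]
      refine Finset.sum_congr rfl fun i _ => ?_
      by_cases h : φ c i = 0 <;> simp [h]
    rw [hR]
    unfold partialDisp
    rw [← Finset.sum_filter]
    refine Finset.sum_bij (fun k _ => (t + k) / q - (t / q + 1)) ?_ ?_ ?_ ?_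
    · intro k hk
      simp only [B, Finset.mem_filter, decide_eq_true_eq] at hk
      have hne : φ c ((t + k) / q - (t / q + 1)) ≠ 0 := by
        rw [hk.2]; exact slotScale_ne_zero _
      exact Finset.mem_filter.2 ⟨hsupp _ _ hne, hne⟩
    · intro k hk k' hk' heq
      simp only [B, Finset.mem_filter, decide_eq_true_eq] at hk hk'
      have h1 : slotScale p (t + k) = slotScale p (t + k') := by rw [← hk.2, ← hk'.2, heq]
      have h2 : (t + k) % q = (t + k') % q := slotScale_inj h1
      have h3 : (t + k) / q = (t + k') / q := by linarith
      have h4 := Int.mul_ediv_add_emod (t + k) q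
      have h5 := Int.mul_ediv_add_emod (t + k') q
      rw [h3] at h4
      have h6 : (k : ℤ) = k' := by linarith
      exact_mod_cast h6
    · intro i hi
      obtain ⟨hi1, hi2⟩ := Finset.mem_filter.1 hi
      obtain ⟨hi0, hiQ⟩ := Finset.mem_Ico.1 hi1
      obtain ⟨u, hu1, hu2⟩ := slotScale_surj hi2 (t / q + 1 + i)
      have h4 := Int.mul_ediv_add_emod u q
      have h5 := Int.mul_ediv_add_emod t q
      have h6 := Int.emod_nonneg u hq.ne'
      have h7 := Int.emod_lt_of_pos u hq
      have h8 := Int.emod_nonneg t hq.ne'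
      have h9 := Int.emod_lt_of_pos t hq
      rw [hu1] at h4
      have htu : t ≤ u := by nlinarith
      have hut : u - t < (Q + 1) * q := by nlinarith
      have hk : t + ((u - t).toNat : ℤ) = u := by omega
      refine ⟨(u - t).toNat, ?_, ?_⟩
      · simp only [B, Finset.mem_filter, decide_eq_true_eq, Finset.mem_range]
        rw [hk, hu1, hu2]
        refine ⟨?_, by ring_nf⟩
        zify
        rw [Int.toNat_of_nonneg (by omega)]
        exact hut
      · rw [hk, hu1]; ring
    · intro k hk
      simp only [B, Finset.mem_filter, decide_eq_true_eq] at hk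
      rw [hk.2]
      simp [g]
  refine ⟨p * (p - 1), exists_design (Fintype.equivFinOfCardEq hcardG)
    (Nat.mul_pos hp.pos (by have := hp.two_le; omega)) g ?_ ((Q + 1) * (p - 1)) B ?_ ?_ r hr ?_⟩
  · intro t
    ext m
    simp only [g, hscale, hdiv]
    simp [moment]
  · intro t
    funext c k
    have e1 : t + ((p * (p - 1) : ℕ) : ℤ) + k = t + k + (p * (p - 1) : ℕ) := by ring
    simp only [B, e1, hscale, hdiv]
    congr 3
    ring
  · intro t
    refine Function.Injective.bijective_of_finite fun c c' h => ?_
    simp only [hdisp] at h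
    rw [← hrep c, ← hrep c']
    exact moment_shift_injective _ _ _ h
  · intro τ
    refine le_trans ?_ hcost
    gcongr
    set f : ℤ → ℕ := fun i => (Finset.univ.filter fun c => φ c i = slotScale p τ).card with hf
    have hBf : ∀ k : ℕ, (Finset.univ.filter fun c => B (τ - k) c k = true).card
        = ∑ i ∈ Finset.Ico (0 : ℤ) Q, if τ / q - ((τ - k) / q + 1) = i then f i else 0 := by
      intro k
      rw [Finset.sum_ite_eq]
      simp only [B, sub_add_cancel, decide_eq_true_eq]
      split_ifs with h
      · rfl
      · rw [Finset.card_eq_zero, Finset.filter_eq_empty_iff]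
        intro c _ hc
        exact h (hsupp c _ (by rw [hc]; exact slotScale_ne_zero _))
    have hfib : ∀ i, (Finset.univ.filter fun c => φ c i ≠ 0).card = (p - 1) * f i := by
      intro i
      rw [Finset.card_eq_sum_card_fiberwise (f := fun c => φ c i)
        (t := Finset.univ.erase (0 : ZMod p)) (fun c hc => by simpa using hc)]
      rw [Finset.sum_const_nat (m := f i), Finset.card_erase_of_mem (Finset.mem_univ _),
        Finset.card_univ, ZMod.card]
      intro s hs
      have hs0 : s ≠ 0 := Finset.ne_of_mem_erase hs
      have hσ := slotScale_ne_zero (p := p) τ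
      refine Finset.card_nbij' (fun c => (slotScale p τ / s) • c)
        (fun c => (s / slotScale p τ) • c) ?_ ?_ ?_ ?_
      · intro c hc
        simp only [Finset.coe_filter, Finset.mem_filter, Finset.mem_univ, true_and,
          Set.mem_ofPred_eq] at hc ⊢
        rw [hsmul _ (div_ne_zero hσ hs0), hc.2, div_mul_cancel₀ _ hs0]
      · intro c hc
        simp only [Finset.coe_filter, Finset.mem_filter, Finset.mem_univ, true_and,
          Set.mem_ofPred_eq] at hc ⊢
        rw [hsmul _ (div_ne_zero hs0 hσ), hc, div_mul_cancel₀ _ hσ]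
        exact ⟨hs0, rfl⟩
      · intro c _
        simp only [smul_smul]
        rw [div_mul_div_cancel₀ hσ, div_self hs0, one_smul]
      · intro c _
        simp only [smul_smul]
        rw [div_mul_div_cancel₀ hs0, div_self hσ, one_smul]
    -- The start times `τ - k` whose window sits at a given position all lie in one phase.
    have hcount : ∀ i, ((Finset.range ((Q + 1) * (p - 1))).filter
        fun k : ℕ => τ / q - ((τ - k) / q + 1) = i).card ≤ p - 1 := by
      intro i
      have : (Finset.Ico ((τ / q - 1 - i) * q) ((τ / q - 1 - i) * q + q)).card = p - 1 := by
        simp [hqdef]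
      rw [← this]
      refine Finset.card_le_card_of_injOn (fun k : ℕ => τ - k) ?_ ?_
      · intro k hk
        simp only [Finset.coe_filter, Set.mem_ofPred_eq] at hk
        have h1 : (τ - k) / q = τ / q - 1 - i := by linarith [hk.2]
        have h4 := Int.mul_ediv_add_emod (τ - k) q
        have h6 := Int.emod_nonneg (τ - k) hq.ne'
        have h7 := Int.emod_lt_of_pos (τ - k) hq
        rw [h1, mul_comm] at h4
        simp only [Finset.coe_Ico, Set.mem_Ico]
        constructor <;> linarith
      · intro k _ k' _ h
        simp only at h
        omega
    calc ∑ k ∈ Finset.range ((Q + 1) * (p - 1)),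
          (Finset.univ.filter fun c => B (τ - k) c k = true).card
        = ∑ i ∈ Finset.Ico (0 : ℤ) Q, ((Finset.range ((Q + 1) * (p - 1))).filter
            fun k : ℕ => τ / q - ((τ - k) / q + 1) = i).card * f i := by
          simp only [hBf]
          rw [Finset.sum_comm]
          refine Finset.sum_congr rfl fun i _ => ?_
          rw [← Finset.sum_filter, Finset.sum_const, smul_eq_mul]
      _ ≤ ∑ i ∈ Finset.Ico (0 : ℤ) Q, (Finset.univ.filter fun c => φ c i ≠ 0).card := by
          refine Finset.sum_le_sum fun i _ => ?_
          rw [hfib]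
          exact Nat.mul_le_mul_right _ (hcount i)
      _ = ∑ c, ((Finset.Ico (0 : ℤ) Q).filter fun i => φ c i ≠ 0).card := by
          simp only [Finset.card_filter]
          rw [Finset.sum_comm]

/-! ### Sparse decompositions along the moment curve -/

/-- At most `d` points of the moment curve in dimension `d` are linearly independent. -/
lemma moment_linearIndependent {d : ℕ} {A : Finset ℤ} (hA : A ⊆ Finset.Ico (0 : ℤ) p)
    (hcard : A.card ≤ d) : LinearIndependent (ZMod p) fun i : A => moment p d i := by
  rw [Fintype.linearIndependent_iff]
  intro s hs
  let eA : Fin A.card ≃ A := A.equivFin.symm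
  have hinj : Function.Injective fun j : Fin A.card => ((eA j : ℤ) : ZMod p) := by
    intro j j' h
    simp only at h
    rw [ZMod.intCast_eq_intCast_iff_dvd_sub] at h
    have h1 := Finset.mem_Ico.1 (hA (eA j).2)
    have h2 := Finset.mem_Ico.1 (hA (eA j').2)
    have := Int.eq_zero_of_abs_lt_dvd h (by rw [abs_lt]; omega)
    exact eA.injective (Subtype.ext (by omega))
  have h0 : (fun j => s (eA j)) = 0 := by
    refine Matrix.eq_zero_of_forall_pow_sum_mul_pow_eq_zero hinj fun i => ?_
    have h1 := congrFun hs ⟨i, i.2.trans_le hcard⟩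
    simp only [Finset.sum_apply, Pi.smul_apply, moment, smul_eq_mul, Pi.zero_apply] at h1
    rw [← h1]
    exact Equiv.sum_comp eA fun x => s x * ((x : ℤ) : ZMod p) ^ (i : ℕ)
  intro i
  simpa using congrFun h0 (eA.symm i)

/-- The span of the moment-curve points with parameters in `A`. -/
def momentSpan (p d : ℕ) (A : Finset ℤ) : Submodule (ZMod p) (Fin d → ZMod p) :=
  Submodule.span (ZMod p) (moment p d '' A)

lemma finrank_momentSpan {d : ℕ} {A : Finset ℤ} (hA : A ⊆ Finset.Ico (0 : ℤ) p)
    (hcard : A.card ≤ d) : Module.finrank (ZMod p) (momentSpan p d A) = A.card := by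
  have := finrank_span_eq_card (moment_linearIndependent hA hcard)
  rw [Fintype.card_coe] at this
  rw [← this, momentSpan, Set.image_eq_range]
  rfl

lemma momentSpan_eq_top {d : ℕ} (hd : d ≤ p) : momentSpan p d (Finset.Ico (0 : ℤ) d) = ⊤ := by
  apply Submodule.eq_top_of_finrank_eq
  rw [finrank_momentSpan (Finset.Ico_subset_Ico_right (by exact_mod_cast hd)) (by simp)]
  simp

lemma card_submodule {d : ℕ} (S : Submodule (ZMod p) (Fin d → ZMod p))
    [DecidablePred fun c => c ∈ S] :
    (Finset.univ.filter fun c => c ∈ S).card = p ^ Module.finrank (ZMod p) S := by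
  have h := Module.card_eq_pow_finrank (K := ZMod p) (V := S)
  rw [ZMod.card] at h
  rw [← h, Fintype.card_subtype]

lemma coeffs_unique {d : ℕ} {A : Finset ℤ} (hA : A ⊆ Finset.Ico (0 : ℤ) p) (hcard : A.card ≤ d)
    {f f' : ℤ → ZMod p} (hf : ∀ i ∉ A, f i = 0) (hf' : ∀ i ∉ A, f' i = 0)
    (heq : ∑ i ∈ A, f i • moment p d i = ∑ i ∈ A, f' i • moment p d i) : f = f' := by
  funext i
  by_cases hi : i ∈ A
  · have hlin := moment_linearIndependent hA hcard
    rw [Fintype.linearIndependent_iff] at hlin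
    have hsum : ∑ j : A, (f j - f' j) • moment p d j = 0 := by
      rw [Finset.sum_coe_sort A fun j => (f j - f' j) • moment p d j]
      simp only [sub_smul, Finset.sum_sub_distrib]
      rw [heq, sub_self]
    exact sub_eq_zero.1 (hlin (fun j : A => f j - f' j) hsum ⟨i, hi⟩)
  · rw [hf i hi, hf' i hi]

/-- A homogeneous choice of supports yields a homogeneous choice of coefficients, since
coefficients on a support of at most `d` points are unique. -/
lemma exists_coeffs {d Q : ℕ} (hQ : Q ≤ p) (A : (Fin d → ZMod p) → Finset ℤ)
    (hAQ : ∀ c, A c ⊆ Finset.Ico (0 : ℤ) Q) (hAd : ∀ c, (A c).card ≤ d)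
    (hAs : ∀ u : ZMod p, u ≠ 0 → ∀ c, A (u • c) = A c) (hspan : ∀ c, c ∈ momentSpan p d (A c)) :
    ∃ φ : (Fin d → ZMod p) → ℤ → ZMod p,
      (∀ c i, φ c i ≠ 0 → i ∈ Finset.Ico (0 : ℤ) Q) ∧
      (∀ u : ZMod p, u ≠ 0 → ∀ c i, φ (u • c) i = u * φ c i) ∧
      (∀ c, ∑ i ∈ Finset.Ico (0 : ℤ) Q, φ c i • moment p d i = c) ∧
      ∀ c, ((Finset.Ico (0 : ℤ) Q).filter fun i => φ c i ≠ 0).card ≤ (A c).card := by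
  classical
  have hAp : ∀ c, A c ⊆ Finset.Ico (0 : ℤ) p := fun c =>
    (hAQ c).trans (Finset.Ico_subset_Ico_right (by exact_mod_cast hQ))
  have hex : ∀ c, ∃ f : ℤ → ZMod p, (∀ i ∉ A c, f i = 0) ∧
      ∑ i ∈ A c, f i • moment p d i = c := by
    intro c
    obtain ⟨f, hf⟩ := (Submodule.mem_span_image_finset_iff_exists_fun' (ZMod p)).1 (hspan c)
    refine ⟨fun i => if i ∈ A c then f i else 0, fun i hi => if_neg hi, ?_⟩
    refine Eq.trans (Finset.sum_congr rfl fun i hi => ?_) hf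
    simp [hi]
  choose φ hφ0 hφ using hex
  refine ⟨φ, ?_, ?_, ?_, ?_⟩
  · intro c i hi
    by_contra hn
    exact hi (hφ0 c i fun h => hn (hAQ c h))
  · intro u hu c i
    refine congrFun (coeffs_unique (hAp c) (hAd c) (f := φ (u • c))
      (f' := fun i => u * φ c i) ?_ ?_ ?_) i
    · intro i hi
      exact hφ0 _ i (by rwa [hAs u hu])
    · intro i hi
      simp [hφ0 c i hi]
    · have h1 := hφ (u • c)
      rw [hAs u hu] at h1
      simp only [mul_smul]
      rw [h1, ← Finset.smul_sum, hφ]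
  · intro c
    conv_rhs => rw [← hφ c]
    refine (Finset.sum_subset (hAQ c) fun i _ hi => ?_).symm
    rw [hφ0 c i hi, zero_smul]
  · intro c
    refine Finset.card_le_card fun i hi => ?_
    by_contra hn
    exact (Finset.mem_filter.1 hi).2 (hφ0 c i hn)

/-- **Second moment bound.** The hyperplanes spanned by `h` of the first `Q` points of the moment
curve in dimension `h + 1` pairwise intersect in codimension two, so by Cauchy–Schwarz their
union contains at least a fraction `K / (p + K)` of the space, where `K = Q.choose h`. -/
lemma card_union_hyperplanes {h Q : ℕ} (hQ : Q ≤ p)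
    (U : Finset (Fin (h + 1) → ZMod p))
    (hU : ∀ c, c ∈ U ↔ ∃ A ∈ (Finset.Ico (0 : ℤ) Q).powersetCard h, c ∈ momentSpan p (h + 1) A) :
    Q.choose h * p ^ (h + 1) ≤ U.card * (p + Q.choose h) := by
  classical
  set 𝒜 := (Finset.Ico (0 : ℤ) Q).powersetCard h with h𝒜
  set K := Q.choose h with hK
  have hp := (Fact.out : p.Prime)
  have hcard𝒜 : 𝒜.card = K := by simp [h𝒜, hK]
  have hsub : ∀ A ∈ 𝒜, A ⊆ Finset.Ico (0 : ℤ) p ∧ A.card = h := fun A hA => by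
    obtain ⟨h1, h2⟩ := Finset.mem_powersetCard.1 hA
    exact ⟨h1.trans (Finset.Ico_subset_Ico_right (by exact_mod_cast hQ)), h2⟩
  have hrank : ∀ A ∈ 𝒜, Module.finrank (ZMod p) (momentSpan p (h + 1) A) = h := fun A hA => by
    rw [finrank_momentSpan (hsub A hA).1 (by rw [(hsub A hA).2]; omega), (hsub A hA).2]
  have hne : ∀ A ∈ 𝒜, ∀ A' ∈ 𝒜, A ≠ A' →
      p * (Finset.univ.filter fun c => c ∈ momentSpan p (h + 1) A ∧
        c ∈ momentSpan p (h + 1) A').card ≤ p ^ h := by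
    intro A hA A' hA' hAA'
    have hy : ∃ y ∈ A', y ∉ A := by
      by_contra! hcon
      exact hAA' (Finset.eq_of_subset_of_card_le hcon
        (by rw [(hsub A hA).2, (hsub A' hA').2])).symm
    obtain ⟨y, hyA', hyA⟩ := hy
    have hyS : moment p (h + 1) y ∉ momentSpan p (h + 1) A := by
      intro hmem
      have hle : momentSpan p (h + 1) (insert y A) ≤ momentSpan p (h + 1) A := by
        refine Submodule.span_le.2 ?_
        rintro _ ⟨x, hx, rfl⟩
        rcases Finset.mem_insert.1 (Finset.mem_coe.1 hx) with rfl | hx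
        · exact hmem
        · exact Submodule.subset_span ⟨x, hx, rfl⟩
      have h1 := Submodule.finrank_mono hle
      have h2 : (insert y A).card = h + 1 := by
        rw [Finset.card_insert_of_notMem hyA, (hsub A hA).2]
      rw [hrank A hA, finrank_momentSpan (Finset.insert_subset ((hsub A' hA').1 hyA')
        (hsub A hA).1) h2.le, h2] at h1
      omega
    have hlt : momentSpan p (h + 1) A ⊓ momentSpan p (h + 1) A' < momentSpan p (h + 1) A' := by
      refine lt_of_le_of_ne inf_le_right fun heq => hyS ?_
      have : moment p (h + 1) y ∈ momentSpan p (h + 1) A' := Submodule.subset_span ⟨y, hyA', rfl⟩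
      rw [← heq] at this
      exact this.1
    have hfr := Submodule.finrank_lt_finrank_of_lt hlt
    rw [hrank A' hA'] at hfr
    have hc := card_submodule (momentSpan p (h + 1) A ⊓ momentSpan p (h + 1) A')
    simp only [Submodule.mem_inf] at hc
    rw [hc, ← pow_succ']
    exact Nat.pow_le_pow_right hp.pos hfr
  -- `m c` is the number of hyperplanes of the family through `c`.
  set m : (Fin (h + 1) → ZMod p) → ℕ := fun c =>
    ∑ A ∈ 𝒜, if c ∈ momentSpan p (h + 1) A then 1 else 0 with hm
  have hm0 : ∀ c ∉ U, m c = 0 := by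
    intro c hc
    refine Finset.sum_eq_zero fun A hA => if_neg fun hcA => hc ((hU c).2 ⟨A, hA, hcA⟩)
  have hfirst : ∑ c ∈ U, m c = K * p ^ h := by
    rw [Finset.sum_subset (Finset.subset_univ U) fun c _ hc => hm0 c hc, hm, Finset.sum_comm,
      ← hcard𝒜, ← smul_eq_mul, ← Finset.sum_const]
    refine Finset.sum_congr rfl fun A hA => ?_
    rw [← Finset.card_filter, card_submodule, hrank A hA]
  have hsecond : p * ∑ c ∈ U, m c ^ 2 ≤ p ^ h * (K * (p + K)) := by
    calc p * ∑ c ∈ U, m c ^ 2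
        = p * ∑ c, m c ^ 2 := by
          rw [Finset.sum_subset (Finset.subset_univ U) fun c _ hc => by rw [hm0 c hc]; rfl]
      _ = ∑ A ∈ 𝒜, ∑ A' ∈ 𝒜, p * (Finset.univ.filter fun c => c ∈ momentSpan p (h + 1) A ∧
            c ∈ momentSpan p (h + 1) A').card := by
          simp only [← Finset.mul_sum, Finset.card_filter]
          congr 1
          rw [Finset.sum_congr rfl fun A _ => Finset.sum_comm, Finset.sum_comm]
          refine Finset.sum_congr rfl fun c _ => ?_
          rw [hm, sq, Finset.sum_mul_sum]
          refine Finset.sum_congr rfl fun A _ => Finset.sum_congr rfl fun A' _ => ?_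
          by_cases h1 : c ∈ momentSpan p (h + 1) A <;>
            by_cases h2 : c ∈ momentSpan p (h + 1) A' <;> simp [h1, h2]
      _ ≤ ∑ A ∈ 𝒜, ∑ A' ∈ 𝒜, p ^ h * ((if A = A' then p else 0) + 1) := by
          refine Finset.sum_le_sum fun A hA => Finset.sum_le_sum fun A' hA' => ?_
          by_cases hAA' : A = A'
          · subst hAA'
            simp only [and_self, if_true]
            rw [card_submodule, hrank A hA, mul_comm]
            exact Nat.mul_le_mul_left _ (Nat.le_succ p)
          · simpa [hAA'] using hne A hA A' hA' hAA'
      _ = p ^ h * (K * (p + K)) := by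
          simp only [← Finset.mul_sum]
          congr 1
          rw [← hcard𝒜, ← smul_eq_mul, ← Finset.sum_const]
          refine Finset.sum_congr rfl fun A hA => ?_
          rw [Finset.sum_add_distrib, Finset.sum_ite_eq, if_pos hA]
          simp
  have hCS : (∑ c ∈ U, m c) ^ 2 ≤ U.card * ∑ c ∈ U, m c ^ 2 := sq_sum_le_card_mul_sum_sq
  rcases Nat.eq_zero_or_pos K with hK0 | hKpos
  · rw [hK0, zero_mul]; exact Nat.zero_le _
  refine Nat.le_of_mul_le_mul_left ?_ (Nat.mul_pos hKpos (pow_pos hp.pos h))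
  calc K * p ^ h * (K * p ^ (h + 1)) = p * (∑ c ∈ U, m c) ^ 2 := by rw [hfirst]; ring
    _ ≤ p * (U.card * ∑ c ∈ U, m c ^ 2) := Nat.mul_le_mul_left _ hCS
    _ = U.card * (p * ∑ c ∈ U, m c ^ 2) := by ring
    _ ≤ U.card * (p ^ h * (K * (p + K))) := Nat.mul_le_mul_left _ hsecond
    _ = K * p ^ h * (U.card * (p + K)) := by ring

/-- The design in dimension `h` that always decomposes over `h` consecutive phases. -/
theorem exists_design_full {h : ℕ} (hp : h ≤ p) {r : ℝ} (hr : 0 < r) (hrh : 2 * r * h ≤ 1) :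
    ∃ (T : ℕ) (R : ORNDesign (p ^ h) T), GuaranteesThroughput R r ∧
      ∀ a b t P, R.route a b t P ≠ 0 → P.latency ≤ 2 * ((h + 1) * (p - 1)) := by
  obtain ⟨φ, h1, h2, h3, h4⟩ := exists_coeffs (p := p) (d := h) (Q := h) hp
    (fun _ => Finset.Ico (0 : ℤ) h) (fun _ => subset_rfl) (fun _ => by simp) (fun _ _ _ => rfl)
    (fun c => by rw [momentSpan_eq_top hp]; trivial)
  refine exists_design_of_coeffs h h φ h1 h2 h3 r hr ?_
  have hle : (∑ c, ((Finset.Ico (0 : ℤ) h).filter fun i => φ c i ≠ 0).card) ≤ p ^ h * h := by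
    refine (Finset.sum_le_card_nsmul _ _ h fun c _ => (h4 c).trans (by simp)).trans ?_
    simp [ZMod.card]
  calc _ ≤ 2 * r * ((p ^ h * h : ℕ) : ℝ) := by gcongr
    _ = (2 * r * h) * (p ^ h : ℕ) := by push_cast; ring
    _ ≤ 1 * (p ^ h : ℕ) := by gcongr
    _ = _ := one_mul _

/-- The design in dimension `h + 1` that decomposes over `h` phases of a window of length `Q`
whenever possible, and over the first `h + 1` phases otherwise. -/
theorem exists_design_sparse {h Q : ℕ} (hhQ : h + 1 ≤ Q) (hQ : Q ≤ p) {r ε : ℝ}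
    (hr : 0 < r) (hrε : 2 * r * (h + 1 - ε) ≤ 1)
    (hK : ε * p ≤ (1 - ε) * (Q.choose h : ℝ)) :
    ∃ (T : ℕ) (R : ORNDesign (p ^ (h + 1)) T), GuaranteesThroughput R r ∧
      ∀ a b t P, R.route a b t P ≠ 0 → P.latency ≤ 2 * ((Q + 1) * (p - 1)) := by
  classical
  have hpp := (Fact.out : p.Prime)
  -- The set of sparse supports depends only on the line through `c`, and so does the choice below.
  let F : (Fin (h + 1) → ZMod p) → Set (Finset ℤ) := fun c =>
    {A | A ∈ (Finset.Ico (0 : ℤ) Q).powersetCard h ∧ c ∈ momentSpan p (h + 1) A}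
  have hF : ∀ u : ZMod p, u ≠ 0 → ∀ c, F (u • c) = F c := by
    intro u hu c
    ext A
    exact and_congr_right fun _ => Submodule.smul_mem_iff _ hu
  let pick : Set (Finset ℤ) → Finset ℤ := fun S =>
    if hS : S.Nonempty then hS.some else Finset.Ico (0 : ℤ) ((h + 1 : ℕ) : ℤ)
  have hpick : ∀ c (hS : (F c).Nonempty), pick (F c) ∈ F c := fun c hS => by
    simp only [pick, dif_pos hS]; exact hS.some_mem
  have hpick' : ∀ c, ¬ (F c).Nonempty → pick (F c) = Finset.Ico (0 : ℤ) ((h + 1 : ℕ) : ℤ) :=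
    fun c hS => by simp only [pick, dif_neg hS]
  let U := Finset.univ.filter fun c => (F c).Nonempty
  have hcardle : ∀ c, (pick (F c)).card + (if c ∈ U then 1 else 0) ≤ h + 1 := by
    intro c
    by_cases hS : (F c).Nonempty
    · rw [(Finset.mem_powersetCard.1 (hpick c hS).1).2, if_pos (by simpa [U] using hS)]
    · rw [hpick' c hS, if_neg (by simpa [U] using hS)]; simp
  obtain ⟨φ, h1, h2, h3, h4⟩ := exists_coeffs (p := p) (d := h + 1) (Q := Q) hQ
    (fun c => pick (F c))
    (fun c => by
      by_cases hS : (F c).Nonempty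
      · exact (Finset.mem_powersetCard.1 (hpick c hS).1).1
      · rw [hpick' c hS]
        exact Finset.Ico_subset_Ico_right (by exact_mod_cast hhQ))
    (fun c => (Nat.le_add_right _ _).trans (hcardle c))
    (fun u hu c => by simp only [hF u hu c])
    (fun c => by
      by_cases hS : (F c).Nonempty
      · exact (hpick c hS).2
      · rw [hpick' c hS, momentSpan_eq_top (hhQ.trans hQ)]; trivial)
  refine exists_design_of_coeffs (h + 1) Q φ h1 h2 h3 r hr ?_
  have hsum : (∑ c, ((Finset.Ico (0 : ℤ) Q).filter fun i => φ c i ≠ 0).card) + U.card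
      ≤ p ^ (h + 1) * (h + 1) := by
    have hUc : U.card = ∑ c, if c ∈ U then 1 else 0 := by simp
    rw [hUc, ← Finset.sum_add_distrib]
    refine (Finset.sum_le_card_nsmul _ _ (h + 1) fun c _ =>
      (Nat.add_le_add_right (h4 c) _).trans (hcardle c)).trans ?_
    simp [ZMod.card]
  have hU := card_union_hyperplanes hQ U (fun c => by
    simp only [U, Finset.mem_filter, Finset.mem_univ, true_and]; rfl)
  set X := ∑ c, ((Finset.Ico (0 : ℤ) Q).filter fun i => φ c i ≠ 0).card
  have hsumR : (X : ℝ) + U.card ≤ (p ^ (h + 1) : ℕ) * (h + 1) := by exact_mod_cast hsum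
  have hUR : (Q.choose h : ℝ) * (p ^ (h + 1) : ℕ) ≤ U.card * (p + Q.choose h) := by
    exact_mod_cast hU
  have hp0 : (0 : ℝ) < p := by exact_mod_cast hpp.pos
  have hUε : ε * (p ^ (h + 1) : ℕ) ≤ U.card := by
    have hpos : (0 : ℝ) < p + Q.choose h := by positivity
    refine le_of_mul_le_mul_right ?_ hpos
    refine le_trans ?_ hUR
    have : ε * (p + Q.choose h) ≤ Q.choose h := by linarith
    calc ε * (p ^ (h + 1) : ℕ) * (p + Q.choose h)
        = (ε * (p + Q.choose h)) * (p ^ (h + 1) : ℕ) := by ring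
      _ ≤ _ := by gcongr
  calc 2 * r * (X : ℝ) ≤ 2 * r * ((p ^ (h + 1) : ℕ) * (h + 1 - ε)) := by
        gcongr; linarith
    _ = (2 * r * (h + 1 - ε)) * (p ^ (h + 1) : ℕ) := by ring
    _ ≤ 1 * (p ^ (h + 1) : ℕ) := by gcongr
    _ = _ := one_mul _

end MomentCurve

/-! ### Choice of parameters -/

lemma le_rpow_inv_of_pow_le {x z : ℝ} {h : ℕ} (hh : h ≠ 0) (hx : 0 ≤ x) (hxz : x ^ h ≤ z) :
    x ≤ z ^ ((1 : ℝ) / h) := by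
  rw [one_div, ← Real.pow_rpow_inv_natCast hx hh]
  exact Real.rpow_le_rpow (by positivity) hxz (by positivity)

lemma pow_le_choose_of_mul_le {h Q : ℕ} (hh : h ≠ 0) {y : ℝ} (hy : 0 ≤ y)
    (hQ : h * y ≤ (Q + 1 - h : ℕ)) : y ^ h ≤ Q.choose h := by
  have hpos : (0 : ℝ) < h := by exact_mod_cast Nat.pos_of_ne_zero hh
  refine le_trans ?_ (Nat.pow_le_choose (α := ℝ) h Q)
  rw [le_div_iff₀ (by positivity)]
  calc y ^ h * (h.factorial : ℝ) ≤ y ^ h * (h : ℝ) ^ h := by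
        gcongr
        exact_mod_cast Nat.factorial_le_pow h
    _ = (h * y) ^ h := by ring
    _ ≤ _ := by gcongr

/-- **upper bound.** There is a universal constant `C > 0` such that for
every `r ∈ (0,1/2]`, writing `1/(2r) = h + 1 − ε` with `(h,ε) ∈ ℕ × (0,1]`, there exist
infinitely many `N` admitting an ORN design on `N` nodes that guarantees throughput `r`
and whose maximum latency is at most `C · h · ((εN)^{1/h} + N^{1/(h+1)})`. -/
theorem upper_bound :
    ∃ C : ℝ, 0 < C ∧
      ∀ (r : ℝ), 0 < r → r ≤ 1 / 2 →
      ∀ (h : ℕ) (ε : ℝ), 0 < ε → ε ≤ 1 → 1 / (2 * r) = (h : ℝ) + 1 - ε →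
      {N : ℕ | 0 < N ∧ ∃ (T : ℕ) (R : ORNDesign N T),
        GuaranteesThroughput R r ∧
        ∀ a b t P, R.route a b t P ≠ 0 →
          (P.latency : ℝ) ≤
            C * h * ((ε * N) ^ ((1 : ℝ) / h) + (N : ℝ) ^ ((1 : ℝ) / (h + 1)))}.Infinite := by
  refine ⟨16, by norm_num, ?_⟩
  intro r hr hr2 h ε hε hε1 heq
  have hrε : 2 * r * ((h : ℝ) + 1 - ε) = 1 := by
    rw [← heq]; field_simp
  have hh : 1 ≤ h := by
    rcases Nat.eq_zero_or_pos h with rfl | hpos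
    · exfalso
      rw [Nat.cast_zero] at hrε
      nlinarith
    · exact hpos
  have hh0 : h ≠ 0 := by omega
  have hhR : (1 : ℝ) ≤ h := by exact_mod_cast hh
  refine Set.infinite_of_forall_exists_gt fun n => ?_
  by_cases hcase : (1 / 2 : ℝ) ^ h ≤ ε
  · obtain ⟨p, hpn, hp⟩ := Nat.exists_infinite_primes (h + n + 1)
    have := Fact.mk hp
    have hrh : 2 * r * h ≤ 1 := by
      rw [← hrε]
      gcongr
      linarith
    obtain ⟨T, R, hR, hlat⟩ := exists_design_full (p := p) (h := h) (by omega) hr hrh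
    refine ⟨p ^ h, ⟨pow_pos hp.pos h, T, R, hR, ?_⟩, ?_⟩
    swap
    · have := Nat.le_self_pow hh0 p
      omega
    intro a b t P hP
    have h1 : (P.latency : ℝ) ≤ 2 * ((h + 1) * p) := by
      have : P.latency ≤ 2 * ((h + 1) * p) :=
        (hlat a b t P hP).trans (by gcongr; omega)
      exact_mod_cast this
    have h2 : (p : ℝ) / 2 ≤ (ε * (p ^ h : ℕ)) ^ ((1 : ℝ) / h) := by
      refine le_rpow_inv_of_pow_le hh0 (by positivity) ?_
      push_cast
      calc ((p : ℝ) / 2) ^ h = (1 / 2) ^ h * p ^ h := by rw [← mul_pow]; ring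
        _ ≤ _ := by gcongr
    have h3 : 0 ≤ ((p ^ h : ℕ) : ℝ) ^ ((1 : ℝ) / (h + 1)) := by positivity
    have hp0 : (0 : ℝ) ≤ p := by positivity
    calc (P.latency : ℝ) ≤ 2 * ((h + 1) * p) := h1
      _ ≤ 16 * h * (p / 2) := by nlinarith
      _ ≤ _ := by gcongr; linarith
  · push Not at hcase
    have hεhalf : ε < 1 / 2 := by
      refine hcase.trans_le ?_
      simpa using pow_le_pow_of_le_one (by norm_num : (0 : ℝ) ≤ 1 / 2) (by norm_num) hh
    obtain ⟨p, hpn, hp⟩ := Nat.exists_infinite_primes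
      ((2 * h + 1) ^ 2 + (n + 1) + ⌈1 / (2 * ε)⌉₊ + ⌈2 / (1 - 2 * ε)⌉₊)
    have := Fact.mk hp
    have hp0 : (0 : ℝ) < p := by exact_mod_cast hp.pos
    have hpR : ((2 * h + 1) ^ 2 : ℝ) ≤ p := by
      have : (2 * h + 1) ^ 2 ≤ p := by omega
      exact_mod_cast this
    have hp1 : 1 ≤ 2 * ε * p := by
      have h1 : 1 / (2 * ε) ≤ p :=
        (Nat.le_ceil _).trans (by exact_mod_cast (by omega : ⌈1 / (2 * ε)⌉₊ ≤ p))
      rw [div_le_iff₀ (by positivity)] at h1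
      linarith
    have hp2 : 2 ≤ (1 - 2 * ε) * p := by
      have h1 : 2 / (1 - 2 * ε) ≤ p :=
        (Nat.le_ceil _).trans (by exact_mod_cast (by omega : ⌈2 / (1 - 2 * ε)⌉₊ ≤ p))
      rw [div_le_iff₀ (by linarith)] at h1
      linarith
    -- With `y = (2εp)^(1/h)`, a window of about `h y` phases has at least `2εp` subsets of size `h`.
    set y : ℝ := (2 * ε * p) ^ ((1 : ℝ) / h) with hy
    have hyh : y ^ h = 2 * ε * p := by
      rw [hy, one_div, Real.rpow_inv_natCast_pow (by positivity) hh0]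
    have hy1 : 1 ≤ y := Real.one_le_rpow hp1 (by positivity)
    set Q := ⌈h * y⌉₊ + h with hQdef
    have hceil : 1 ≤ ⌈h * y⌉₊ := Nat.ceil_pos.2 (by positivity)
    have hQR : (Q : ℝ) ≤ h * y + 1 + h := by
      rw [hQdef]
      push_cast
      linarith [Nat.ceil_lt_add_one (by positivity : 0 ≤ h * y)]
    have hQp : Q ≤ p := by
      suffices h * y + 1 + h ≤ (p : ℝ) by exact_mod_cast hQR.trans this
      rcases hh.eq_or_lt with h1 | h2
      · rw [← h1] at hyh ⊢
        rw [pow_one] at hyh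
        push_cast
        linarith
      · have hysq : y ^ 2 ≤ p := by
          calc y ^ 2 ≤ y ^ h := pow_le_pow_right₀ hy1 h2
            _ = 2 * ε * p := hyh
            _ ≤ p := by nlinarith
        have h3 : ((2 * h + 1) * y) ^ 2 ≤ (p : ℝ) ^ 2 := by
          rw [mul_pow, sq (p : ℝ)]
          gcongr
        have h4 := (sq_le_sq₀ (by positivity) hp0.le).1 h3
        nlinarith
    have hchoose : 2 * ε * p ≤ (Q.choose h : ℝ) := by
      rw [← hyh]
      refine pow_le_choose_of_mul_le hh0 (by linarith) ?_
      have : ⌈h * y⌉₊ ≤ Q + 1 - h := by omega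
      exact (Nat.le_ceil _).trans (by exact_mod_cast this)
    obtain ⟨T, R, hR, hlat⟩ := exists_design_sparse (p := p) (h := h) (Q := Q) (by omega) hQp hr
      hrε.le (by nlinarith)
    refine ⟨p ^ (h + 1), ⟨pow_pos hp.pos _, T, R, hR, ?_⟩, ?_⟩
    swap
    · have := Nat.le_self_pow (Nat.succ_ne_zero h) p
      have h5 : n < p := by omega
      exact h5.trans_le this
    intro a b t P hP
    have h1 : (P.latency : ℝ) ≤ 2 * ((Q + 1) * p) := by
      have : P.latency ≤ 2 * ((Q + 1) * p) :=
        (hlat a b t P hP).trans (by gcongr; omega)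
      exact_mod_cast this
    have h2 : y * p / 2 ≤ (ε * (p ^ (h + 1) : ℕ)) ^ ((1 : ℝ) / h) := by
      refine le_rpow_inv_of_pow_le hh0 (by positivity) ?_
      rw [div_pow, mul_pow, hyh, div_le_iff₀ (by positivity)]
      push_cast
      have h2h : (2 : ℝ) ≤ 2 ^ h := by
        simpa using pow_le_pow_right₀ (by norm_num : (1 : ℝ) ≤ 2) hh
      calc 2 * ε * p * (p : ℝ) ^ h = ε * p ^ (h + 1) * 2 := by ring
        _ ≤ _ := by gcongr
    have h3 : 0 ≤ ((p ^ (h + 1) : ℕ) : ℝ) ^ ((1 : ℝ) / (h + 1)) := by positivity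
    have h4 : (Q : ℝ) + 1 ≤ 4 * (h * y) := by nlinarith
    calc (P.latency : ℝ) ≤ 2 * ((Q + 1) * p) := h1
      _ ≤ 2 * (4 * (h * y) * p) := by gcongr
      _ = 16 * h * (y * p / 2) := by ring
      _ ≤ _ := by gcongr; linarith
end

section
/- Every ORN design on N ≥ 2 nodes that guarantees throughput r satisfies r ≤ 1/2 + 1/(2(N−1)). -/
/-!
Two families of demands are tested against a design guaranteeing throughput `r`.

* The uniform demand `r / (N - 1)` on every pair `a ≠ b` bounds the total number of physical hops:
  each of the `N` physical edges of a timeslot carries at most one unit.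
* For a timeslot `s`, the demand `r` on the pairs `(a, π_s a)`, repeated in all timeslots, bounds
  the direct traffic: the flow from `a` to `π_s a` crossing the edge `(a, s)` is, summed over all
  starting times, at most `1 / r`.

A path between distinct nodes has two physical edges, or its only physical edge leads directly from
source to destination (`two_edges_or_direct`). Hence hops plus direct crossings amount to at least
two per unit of flow (`two_le_load`). Summing over ordered pairs `a ≠ b` and over the starting times
of one period, where periodicity exchanges "start in the period, cross at any time" with
"start at any time, cross in the period" (`tsum_sum_periodic_comm`), gives
`2 N (N - 1) T ≤ T (N (N - 1) / r + N / r)`, that is, `r ≤ N / (2 (N - 1))`.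
-/

open scoped ENNReal

/-! ### Paths -/

lemma usesEdge_cons {N T : ℕ} (S : ConnSched N T) (v : Fin N × ℤ) (b : Bool) (l : List Bool)
    (e : Fin N × ℤ) :
    (ORNPath.mk v (b :: l)).usesEdge S e ↔
      (b = true ∧ v = e) ∨ (ORNPath.mk (ORNPath.stepFn S v b) l).usesEdge S e := by
  constructor
  · rintro ⟨⟨k, hk⟩, h1, h2⟩
    cases k with
    | zero => left; exact ⟨by simpa using h1, by simpa [ORNPath.vertexAt] using h2⟩
    | succ k =>
      right
      refine ⟨⟨k, by simpa using hk⟩, by simpa using h1, by simpa [ORNPath.vertexAt] using h2⟩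
  · rintro (⟨h1, h2⟩ | ⟨⟨k, hk⟩, h1, h2⟩)
    · exact ⟨⟨0, by simp⟩, by simpa using h1, by simpa [ORNPath.vertexAt] using h2⟩
    · exact ⟨⟨k + 1, by simpa using hk⟩, by simpa using h1,
        by simpa [ORNPath.vertexAt] using h2⟩

lemma not_usesEdge_nil {N T : ℕ} (S : ConnSched N T) (v e : Fin N × ℤ) :
    ¬ (ORNPath.mk v []).usesEdge S e := by
  rintro ⟨⟨k, hk⟩, -⟩
  simp at hk

lemma start_time_le_of_usesEdge {N T : ℕ} (S : ConnSched N T) (l : List Bool) :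
    ∀ v e : Fin N × ℤ, (ORNPath.mk v l).usesEdge S e → v.2 ≤ e.2 := by
  induction l with
  | nil => intro v e h; exact absurd h (not_usesEdge_nil S v e)
  | cons b l ih =>
    intro v e h
    rcases (usesEdge_cons S v b l e).1 h with ⟨-, rfl⟩ | h
    · exact le_rfl
    · have := ih _ _ h
      simp only [ORNPath.stepFn] at this
      omega

lemma dest_eq_of_no_edge {N T : ℕ} (S : ConnSched N T) (l : List Bool) :
    ∀ v : Fin N × ℤ, (∀ e, ¬ (ORNPath.mk v l).usesEdge S e) →
      ((ORNPath.mk v l).dest S).1 = v.1 := by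
  induction l with
  | nil => intro v _; rfl
  | cons b l ih =>
    intro v h
    have hb : b = false := by
      by_contra hb
      exact h v ((usesEdge_cons S v b l v).2 (Or.inl ⟨by simpa using hb, rfl⟩))
    have := ih (ORNPath.stepFn S v b) fun e he => h e ((usesEdge_cons S v b l e).2 (Or.inr he))
    subst hb
    simpa [ORNPath.dest, ORNPath.stepFn] using this

/-- A path between distinct nodes uses two physical edges, or it uses an edge joining its source
node directly to its destination node. -/
lemma two_edges_or_direct {N T : ℕ} (S : ConnSched N T) (l : List Bool) :
    ∀ v : Fin N × ℤ, ((ORNPath.mk v l).dest S).1 ≠ v.1 →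
      (∃ e₁ e₂, e₁ ≠ e₂ ∧ (ORNPath.mk v l).usesEdge S e₁ ∧ (ORNPath.mk v l).usesEdge S e₂) ∨
      ∃ s, (ORNPath.mk v l).usesEdge S (v.1, s) ∧
        S.perm s v.1 = ((ORNPath.mk v l).dest S).1 := by
  induction l with
  | nil => intro v h; exact absurd rfl h
  | cons b l ih =>
    intro v h
    cases b with
    | false =>
      rcases ih (ORNPath.stepFn S v false) (by simpa [ORNPath.dest, ORNPath.stepFn] using h) with
        ⟨e₁, e₂, hne, h1, h2⟩ | ⟨s, h1, h2⟩
      · exact Or.inl ⟨e₁, e₂, hne, (usesEdge_cons ..).2 (Or.inr h1),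
          (usesEdge_cons ..).2 (Or.inr h2)⟩
      · exact Or.inr ⟨s, (usesEdge_cons ..).2 (Or.inr (by simpa [ORNPath.stepFn] using h1)),
          by simpa [ORNPath.dest, ORNPath.stepFn] using h2⟩
    | true =>
      have hv : (ORNPath.mk v (true :: l)).usesEdge S v :=
        (usesEdge_cons ..).2 (Or.inl ⟨rfl, rfl⟩)
      by_cases hl : ∃ e, (ORNPath.mk (ORNPath.stepFn S v true) l).usesEdge S e
      · obtain ⟨e, he⟩ := hl
        refine Or.inl ⟨v, e, ?_, hv, (usesEdge_cons ..).2 (Or.inr he)⟩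
        rintro rfl
        have := start_time_le_of_usesEdge S l _ _ he
        simp only [ORNPath.stepFn] at this
        omega
      · push Not at hl
        have := dest_eq_of_no_edge S l _ hl
        exact Or.inr ⟨v.2, hv, by simpa [ORNPath.dest, ORNPath.stepFn] using this.symm⟩

lemma usesEdge_shift {N T : ℕ} (S : ConnSched N T) (l : List Bool) :
    ∀ (v : Fin N × ℤ) (i : Fin N) (s : ℤ),
      (ORNPath.mk (v.1, v.2 + T) l).usesEdge S (i, s + T) ↔
        (ORNPath.mk v l).usesEdge S (i, s) := by
  induction l with
  | nil => intro v i s; simp only [not_usesEdge_nil]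
  | cons b l ih =>
    intro v i s
    have hstep : ORNPath.stepFn S (v.1, v.2 + T) b =
        ((ORNPath.stepFn S v b).1, (ORNPath.stepFn S v b).2 + T) := by
      simp only [ORNPath.stepFn, S.periodic]
      ext1 <;> simp only; ring
    rw [usesEdge_cons, usesEdge_cons, hstep, ih]
    obtain ⟨v1, v2⟩ := v
    simp

/-! ### Edge loads of routing schemes -/

lemma edgeFlow_eq_indicator {N T : ℕ} (S : ConnSched N T) (f : ORNPath N → ℝ≥0∞)
    (e : Fin N × ℤ) :
    edgeFlow S f e = ∑' P, Set.indicator {P : ORNPath N | P.usesEdge S e} f P :=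
  tsum_subtype {P : ORNPath N | P.usesEdge S e} f

/-- Translation of paths in time, as a bijection. -/
def shiftEquiv (N : ℕ) (s : ℤ) : ORNPath N ≃ ORNPath N where
  toFun P := P.shift s
  invFun P := P.shift (-s)
  left_inv P := by simp [ORNPath.shift]
  right_inv P := by simp [ORNPath.shift]

lemma edgeFlow_route_periodic {N T : ℕ} (R : ORNDesign N T) (a b i : Fin N) (t s : ℤ) :
    edgeFlow R.sched (R.route a b (t + T)) (i, s + T) =
      edgeFlow R.sched (R.route a b t) (i, s) := by
  rw [edgeFlow_eq_indicator, edgeFlow_eq_indicator, ← (shiftEquiv N T).tsum_eq]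
  refine tsum_congr fun P => ?_
  have h := usesEdge_shift R.sched P.steps P.start i s
  by_cases hP : P.usesEdge R.sched (i, s)
  · rw [Set.indicator_of_mem (show P ∈ {P : ORNPath N | P.usesEdge R.sched (i, s)} from hP),
      Set.indicator_of_mem]
    · exact R.route_periodic a b t P
    · exact h.2 hP
  · rw [Set.indicator_of_notMem (show P ∉ {P : ORNPath N | P.usesEdge R.sched (i, s)} from hP),
      Set.indicator_of_notMem]
    exact fun h' => hP (h.1 h')

lemma edgeFlow_inducedFlow {N T : ℕ} (R : ORNDesign N T) (D : ℤ → Fin N → Fin N → ℝ)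
    (e : Fin N × ℤ) :
    edgeFlow R.sched (inducedFlow R D) e =
      ∑ a, ∑ b, ∑' t, ENNReal.ofReal (D t a b) * edgeFlow R.sched (R.route a b t) e := by
  simp only [edgeFlow, inducedFlow]
  rw [ENNReal.tsum_comm]
  simp only [ENNReal.tsum_mul_left]
  rw [ENNReal.tsum_prod', tsum_fintype]
  refine Finset.sum_congr rfl fun a _ => ?_
  rw [ENNReal.tsum_prod', tsum_fintype]

/-- The load that the unit flow `R_{a,b,t}` puts on the physical edges of timeslot `s`, with the
edge from `a` to `b`, if present in that timeslot, counted twice. -/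
noncomputable def load {N T : ℕ} (R : ORNDesign N T) (a b : Fin N) (t s : ℤ) : ℝ≥0∞ :=
  ∑ i, edgeFlow R.sched (R.route a b t) (i, s) +
    if R.sched.perm s a = b then edgeFlow R.sched (R.route a b t) (a, s) else 0

lemma load_periodic {N T : ℕ} (R : ORNDesign N T) (a b : Fin N) (t s : ℤ) :
    load R a b (t + T) (s + T) = load R a b t s := by
  simp only [load, edgeFlow_route_periodic, R.sched.periodic]

/-- The number of physical edges plus the number of direct edges is at least two on every path
carrying flow between distinct nodes. -/
lemma two_le_load {N T : ℕ} (R : ORNDesign N T) {a b : Fin N} (hab : a ≠ b) (t : ℤ) :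
    2 ≤ ∑' s, load R a b t s := by
  classical
  set f := R.route a b t with hf
  let u : ORNPath N → Fin N × ℤ → ℝ≥0∞ := fun P e => if P.usesEdge R.sched e then 1 else 0
  have hw : ∀ e, edgeFlow R.sched f e = ∑' P, f P * u P e := by
    intro e
    rw [edgeFlow_eq_indicator]
    refine tsum_congr fun P => ?_
    simp [Set.indicator_apply, u]
  have hload : ∑' s, load R a b t s = ∑' P, f P *
      ∑' s, (∑ i, u P (i, s) + if R.sched.perm s a = b then u P (a, s) else 0) := by
    simp only [← ENNReal.tsum_mul_left]
    rw [ENNReal.tsum_comm]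
    refine tsum_congr fun s => ?_
    simp only [load, ← hf, hw, mul_add, ENNReal.tsum_add, Finset.mul_sum]
    congr 1
    · rw [Summable.tsum_finsetSum fun _ _ => ENNReal.summable]
    · split_ifs <;> simp
  have hpt : ∀ P, f P * 2 ≤ f P *
      ∑' s, (∑ i, u P (i, s) + if R.sched.perm s a = b then u P (a, s) else 0) := by
    intro P
    by_cases hP : f P = 0
    · simp [hP]
    gcongr
    obtain ⟨hs, hd⟩ := R.route_support a b t P hP
    have hfirst : ∑' s, ∑ i, u P (i, s) = ∑' e, u P e := by
      rw [ENNReal.tsum_prod', ENNReal.tsum_comm]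
      exact tsum_congr fun s => (tsum_fintype _).symm
    rw [ENNReal.tsum_add, hfirst]
    have key := two_edges_or_direct R.sched P.steps P.start (by
      change (P.dest R.sched).1 ≠ P.start.1
      rw [hd, hs]; exact hab.symm)
    rcases key with ⟨e₁, e₂, hne, h1, h2⟩ | ⟨s, h1, h2⟩
    · have h1 : P.usesEdge R.sched e₁ := h1
      have h2 : P.usesEdge R.sched e₂ := h2
      refine le_trans ?_ (le_trans (ENNReal.sum_le_tsum {e₁, e₂}) le_self_add)
      rw [Finset.sum_pair hne]
      simp [u, h1, h2, one_add_one_eq_two]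
    · have h1 : P.usesEdge R.sched (P.start.1, s) := h1
      have h2 : R.sched.perm s P.start.1 = (P.dest R.sched).1 := h2
      rw [hs] at h1 h2
      rw [hd] at h2
      rw [← one_add_one_eq_two]
      refine add_le_add (le_trans ?_ (ENNReal.le_tsum (a, s))) (le_trans ?_ (ENNReal.le_tsum s))
      · simp only [u]; rw [if_pos h1]
      · rw [if_pos h2]; simp only [u]; rw [if_pos h1]
  rw [hload]
  calc (2 : ℝ≥0∞) = ∑' P, f P * 2 := by
        rw [ENNReal.tsum_mul_right, hf, R.route_unit, one_mul]
    _ ≤ _ := ENNReal.tsum_le_tsum hpt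

/-- For a function on `ℤ × ℤ` invariant under translation by `(T, T)`, the sum over the vertical
strip of width `T` equals the sum over the horizontal one. -/
lemma tsum_sum_periodic_comm {T : ℕ} (hT : 0 < T) (F : ℤ → ℤ → ℝ≥0∞)
    (hF : ∀ t s, F (t + T) (s + T) = F t s) :
    ∑ t : Fin T, ∑' s, F (t : ℕ) s = ∑ s : Fin T, ∑' t, F t (s : ℕ) := by
  have : NeZero T := ⟨hT.ne'⟩
  have hnat : ∀ (k : ℕ) t s, F (t + k * T) (s + k * T) = F t s := by
    intro k
    induction k with
    | zero => simp
    | succ k ih =>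
      intro t s
      rw [← ih t s, ← hF (t + k * T)]
      push_cast
      congr 1 <;> ring
  have hshift : ∀ (k : ℤ) t s, F (t + k * T) s = F t (s + (-k) * T) := by
    intro k t s
    obtain ⟨n, rfl | rfl⟩ := k.eq_nat_or_neg
    · rw [← hnat n t]
      congr 1; ring
    · rw [← hnat n (t + -(n : ℤ) * T) s]
      congr 1 <;> ring
  have split : ∀ g : ℤ → ℝ≥0∞, ∑' s, g s = ∑ j : Fin T, ∑' k : ℤ, g ((j : ℕ) + k * T) := by
    intro g
    rw [← (Int.divModEquiv T).symm.tsum_eq, ENNReal.tsum_prod', ENNReal.tsum_comm, tsum_fintype]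
    refine Finset.sum_congr rfl fun j _ => tsum_congr fun k => ?_
    simp [Int.divModEquiv, add_comm]
  rw [Finset.sum_congr rfl fun (t : Fin T) _ => split (F (t : ℕ)),
    Finset.sum_congr rfl fun (s : Fin T) _ => split fun t => F t (s : ℕ), Finset.sum_comm]
  refine Finset.sum_congr rfl fun s _ => Finset.sum_congr rfl fun t _ => ?_
  rw [tsum_congr fun k => hshift k _ _]
  exact ((Equiv.neg ℤ).tsum_eq fun k : ℤ => F (t : ℕ) ((s : ℕ) + k * T)).symm

/-! ### The two demands -/

/-- Feasibility of the uniform demand. -/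
lemma uniform_bound {N T : ℕ} (hN : 2 ≤ N) (R : ORNDesign N T) {r : ℝ} (hr0 : 0 ≤ r)
    (hr : GuaranteesThroughput R r) (e : Fin N × ℤ) :
    ENNReal.ofReal r * ∑ a, ∑ b, (if a ≠ b then
      ∑' t, edgeFlow R.sched (R.route a b t) e else 0) ≤ ((N - 1 : ℕ) : ℝ≥0∞) := by
  have hN1 : (0 : ℝ) < ((N - 1 : ℕ) : ℝ) := by exact_mod_cast (by omega : 0 < N - 1)
  have hcard : ∀ a : Fin N, (Finset.univ.filter fun b => a ≠ b).card = N - 1 := by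
    intro a
    rw [Finset.filter_ne, Finset.card_erase_of_mem (Finset.mem_univ a), Finset.card_univ,
      Fintype.card_fin]
  have hrow : ∀ a : Fin N, ∑ b, (if a ≠ b then r / ((N - 1 : ℕ) : ℝ) else 0) = r := by
    intro a
    rw [← Finset.sum_filter, Finset.sum_const, hcard, nsmul_eq_mul, mul_div_cancel₀ _ hN1.ne']
  have h := hr (fun _ a b => if a ≠ b then r / ((N - 1 : ℕ) : ℝ) else 0)
    ⟨fun t a b => by dsimp only; split_ifs <;> positivity, fun t a => (hrow a).le, fun t b => by
      simpa only [ne_comm] using (hrow b).le⟩ e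
  rw [edgeFlow_inducedFlow] at h
  have hrho : ENNReal.ofReal r =
      ((N - 1 : ℕ) : ℝ≥0∞) * ENNReal.ofReal (r / ((N - 1 : ℕ) : ℝ)) := by
    rw [← ENNReal.ofReal_natCast, ← ENNReal.ofReal_mul hN1.le, mul_div_cancel₀ _ hN1.ne']
  calc _ = ((N - 1 : ℕ) : ℝ≥0∞) * ∑ a, ∑ b, ∑' t, ENNReal.ofReal
        (if a ≠ b then r / ((N - 1 : ℕ) : ℝ) else 0) * edgeFlow R.sched (R.route a b t) e := by
        rw [hrho, mul_assoc, Finset.mul_sum]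
        congr 1
        refine Finset.sum_congr rfl fun a _ => ?_
        rw [Finset.mul_sum]
        refine Finset.sum_congr rfl fun b _ => ?_
        split_ifs <;> simp [ENNReal.tsum_mul_left]
    _ ≤ ((N - 1 : ℕ) : ℝ≥0∞) * 1 := by gcongr
    _ = _ := mul_one _

/-- Feasibility of the demand that sends, in all timeslots, from every node `i` to `π_s i`. -/
lemma direct_bound {N T : ℕ} (R : ORNDesign N T) {r : ℝ} (hr0 : 0 ≤ r)
    (hr : GuaranteesThroughput R r) (a : Fin N) (s : ℤ) :
    ENNReal.ofReal r *
      ∑' t, edgeFlow R.sched (R.route a (R.sched.perm s a) t) (a, s) ≤ 1 := by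
  have h := hr (fun _ a b => if R.sched.perm s a = b then r else 0)
    ⟨fun t a b => by dsimp only; split_ifs <;> positivity, fun t a => by simp, fun t b => by
      simp [← Equiv.eq_symm_apply]⟩ (a, s)
  rw [edgeFlow_inducedFlow] at h
  refine le_trans ?_ h
  refine le_trans ?_ (Finset.single_le_sum (fun _ _ => zero_le) (Finset.mem_univ a))
  refine le_trans ?_ (Finset.single_le_sum (fun _ _ => zero_le)
    (Finset.mem_univ (R.sched.perm s a)))
  simp [ENNReal.tsum_mul_left]

/-- The total load on one timeslot, over all pairs of distinct nodes and all starting times. -/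
lemma load_bound {N T : ℕ} (hN : 2 ≤ N) (R : ORNDesign N T) {r : ℝ} (hr0 : 0 ≤ r)
    (hr : GuaranteesThroughput R r) (s : ℤ) :
    ENNReal.ofReal r * ∑ a, ∑ b, (if a ≠ b then ∑' t, load R a b t s else 0) ≤
      ((N * N : ℕ) : ℝ≥0∞) := by
  have hle : ∑ a, ∑ b, (if a ≠ b then ∑' t, load R a b t s else 0) ≤
      (∑ i, ∑ a, ∑ b, if a ≠ b then ∑' t, edgeFlow R.sched (R.route a b t) (i, s) else 0) +
      ∑ a, ∑' t, edgeFlow R.sched (R.route a (R.sched.perm s a) t) (a, s) := by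
    conv_rhs => rw [Finset.sum_comm, ← Finset.sum_add_distrib]
    refine Finset.sum_le_sum fun a _ => ?_
    calc _ ≤ ∑ b, ((∑ i, if a ≠ b then
              ∑' t, edgeFlow R.sched (R.route a b t) (i, s) else 0) +
            if R.sched.perm s a = b then
              ∑' t, edgeFlow R.sched (R.route a b t) (a, s) else 0) := by
          refine Finset.sum_le_sum fun b _ => ?_
          by_cases hab : a = b
          · simp [hab]
          · simp only [ne_eq, hab, not_false_eq_true, if_true, load, ENNReal.tsum_add]
            rw [Summable.tsum_finsetSum fun _ _ => ENNReal.summable]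
            refine add_le_add le_rfl ?_
            split_ifs <;> simp
      _ = _ := by
          rw [Finset.sum_add_distrib, Finset.sum_comm]
          simp
  calc _ ≤ _ := mul_le_mul_right hle _
    _ = (∑ i, ENNReal.ofReal r * ∑ a, ∑ b, if a ≠ b then
          ∑' t, edgeFlow R.sched (R.route a b t) (i, s) else 0) +
        ∑ a, ENNReal.ofReal r *
          ∑' t, edgeFlow R.sched (R.route a (R.sched.perm s a) t) (a, s) := by
        rw [mul_add, Finset.mul_sum, Finset.mul_sum]
    _ ≤ (∑ _i : Fin N, ((N - 1 : ℕ) : ℝ≥0∞)) + ∑ _a : Fin N, 1 := by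
        gcongr with i _ a _
        · exact uniform_bound hN R hr0 hr (i, s)
        · exact direct_bound R hr0 hr a s
    _ = ((N * N : ℕ) : ℝ≥0∞) := by
        obtain ⟨n, rfl⟩ : ∃ n, N = n + 1 := ⟨N - 1, by omega⟩
        simp
        ring

/-- Every ORN design on `N ≥ 2` nodes that guarantees throughput `r`
satisfies `r ≤ 1/2 + 1/(2(N−1))`. -/
theorem throughput_at_most_half {N T : ℕ} (hN : 2 ≤ N) (R : ORNDesign N T) (r : ℝ)
    (hr : GuaranteesThroughput R r) :
    r ≤ 1 / 2 + 1 / (2 * ((N : ℝ) - 1)) := by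
  have hN' : (2 : ℝ) ≤ N := by exact_mod_cast hN
  have hN1 : (0 : ℝ) < (N : ℝ) - 1 := by linarith
  rcases le_total r 0 with hr0 | hr0
  · exact hr0.trans (by positivity)
  have hT := R.sched.Tpos
  have hlow : ((T * (N * (N - 1)) * 2 : ℕ) : ℝ≥0∞) ≤
      ∑ s : Fin T, ∑ a, ∑ b, (if a ≠ b then ∑' t, load R a b t (s : ℕ) else 0) := by
    have hpair : ∀ a b : Fin N, (if a ≠ b then ((T * 2 : ℕ) : ℝ≥0∞) else 0) ≤
        ∑ s : Fin T, (if a ≠ b then ∑' t, load R a b t (s : ℕ) else 0) := by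
      intro a b
      by_cases hab : a = b
      · simp [hab]
      · simp only [ne_eq, hab, not_false_eq_true, if_true]
        rw [← tsum_sum_periodic_comm hT _ (load_periodic R a b)]
        calc ((T * 2 : ℕ) : ℝ≥0∞) = ∑ _t : Fin T, 2 := by simp
          _ ≤ _ := Finset.sum_le_sum fun t _ => two_le_load R hab _
    calc ((T * (N * (N - 1)) * 2 : ℕ) : ℝ≥0∞)
        = ∑ a : Fin N, ∑ b : Fin N, (if a ≠ b then ((T * 2 : ℕ) : ℝ≥0∞) else 0) := by
          simp only [← Finset.sum_filter, Finset.sum_const, Finset.filter_ne,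
            Finset.card_erase_of_mem (Finset.mem_univ _), Finset.card_univ, Fintype.card_fin,
            nsmul_eq_mul, ← Nat.cast_mul]
          congr 1; ring
      _ ≤ _ := Finset.sum_le_sum fun a _ => Finset.sum_le_sum fun b _ => hpair a b
      _ = _ := by
          rw [Finset.sum_comm]
          simp_rw [Finset.sum_comm (s := (Finset.univ : Finset (Fin T)))]
          rw [Finset.sum_comm]
  have hmain : ENNReal.ofReal r * ((T * (N * (N - 1)) * 2 : ℕ) : ℝ≥0∞) ≤
      ((T * (N * N) : ℕ) : ℝ≥0∞) := by
    refine (mul_le_mul_right hlow _).trans ?_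
    rw [Finset.mul_sum]
    refine (Finset.sum_le_sum fun (s : Fin T) _ => load_bound hN R hr0 hr (s : ℕ)).trans ?_
    simp
  rw [← ENNReal.ofReal_natCast, ← ENNReal.ofReal_natCast, ← ENNReal.ofReal_mul hr0,
    ENNReal.ofReal_le_ofReal_iff (by positivity)] at hmain
  push_cast [Nat.cast_sub (by omega : 1 ≤ N)] at hmain
  have hTN : (0 : ℝ) < T * N := by
    have : (0 : ℝ) < T := by exact_mod_cast hT
    positivity
  have h2 : r * (2 * ((N : ℝ) - 1)) ≤ N := by
    refine le_of_mul_le_mul_left ?_ hTN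
    linarith
  have h3 : 1 / 2 + 1 / (2 * ((N : ℝ) - 1)) = N / (2 * ((N : ℝ) - 1)) := by
    field_simp
    ring
  rw [h3, le_div_iff₀ (by positivity)]
  exact h2
end

section
/- Let N ≥ 1 be an integer, r ≥ 0 a real number, and D an N×N matrix with nonnegative real entries such that every row sum and every column sum of D is at most r. Then there exists an N×N matrix D′ with nonnegative real entries such that D′_{ij} ≥ D_{ij} for all i, j, and every row sum and every column sum of D′ equals exactly r. -/
/-!
Let `a i = r - ∑ j, D i j` and `b j = r - ∑ i, D i j` be the row and column deficits. They are
nonnegative and have the same total `S`, namely `N * r` minus the sum of all entries of `D`.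
Adding the rank-one matrix `a i * b j / S` therefore raises row `i` by exactly `a i` and column `j`
by exactly `b j`. If `S = 0`, all deficits vanish and so does the correction.
-/

/-- **demand inflation.** Let `N ≥ 1`, `r ≥ 0`, and let `D` be an `N×N`
matrix with nonnegative real entries all of whose row and column sums are at most `r`.
Then there is an `N×N` matrix `D′` with nonnegative entries, entrywise at least `D`,
all of whose row and column sums equal exactly `r`. -/
theorem demand_inflation (N : ℕ) (hN : 1 ≤ N) (r : ℝ) (hr : 0 ≤ r)
    (D : Fin N → Fin N → ℝ) (hD : ∀ i j, 0 ≤ D i j)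
    (hrow : ∀ i, ∑ j, D i j ≤ r) (hcol : ∀ j, ∑ i, D i j ≤ r) :
    ∃ D' : Fin N → Fin N → ℝ,
      (∀ i j, 0 ≤ D' i j) ∧ (∀ i j, D i j ≤ D' i j) ∧
      (∀ i, ∑ j, D' i j = r) ∧ (∀ j, ∑ i, D' i j = r) := by
  obtain ⟨a, ha⟩ : ∃ a : Fin N → ℝ, ∀ i, a i = r - ∑ j, D i j := ⟨_, fun _ => rfl⟩
  obtain ⟨b, hb⟩ : ∃ b : Fin N → ℝ, ∀ j, b j = r - ∑ i, D i j := ⟨_, fun _ => rfl⟩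
  have ha0 : ∀ i, 0 ≤ a i := fun i => by rw [ha]; linarith [hrow i]
  have hb0 : ∀ j, 0 ≤ b j := fun j => by rw [hb]; linarith [hcol j]
  obtain ⟨S, hS⟩ : ∃ S, S = ∑ i, a i := ⟨_, rfl⟩
  have hSb : S = ∑ j, b j := by
    simp only [hS, ha, hb, Finset.sum_sub_distrib]
    rw [Finset.sum_comm]
  have hS0 : 0 ≤ S := hS ▸ Finset.sum_nonneg fun i _ => ha0 i
  -- These two identities also hold for `S = 0`, where `x / 0 = 0` and all deficits vanish.
  have hra : ∀ i, a i * S / S = a i := fun i => by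
    refine mul_div_cancel_of_imp fun h => ?_
    exact (Finset.sum_eq_zero_iff_of_nonneg fun i _ => ha0 i).1 (hS ▸ h) i (Finset.mem_univ i)
  have hrb : ∀ j, S * b j / S = b j := fun j => by
    rw [mul_comm]
    refine mul_div_cancel_of_imp fun h => ?_
    exact (Finset.sum_eq_zero_iff_of_nonneg fun j _ => hb0 j).1 (hSb ▸ h) j (Finset.mem_univ j)
  have hE : ∀ i j, 0 ≤ a i * b j / S := fun i j =>
    div_nonneg (mul_nonneg (ha0 i) (hb0 j)) hS0
  refine ⟨fun i j => D i j + a i * b j / S, fun i j => add_nonneg (hD i j) (hE i j),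
    fun i j => le_add_of_nonneg_right (hE i j), fun i => ?_, fun j => ?_⟩
  · rw [Finset.sum_add_distrib, ← Finset.sum_div, ← Finset.mul_sum, ← hSb, hra, ha]
    ring
  · rw [Finset.sum_add_distrib, ← Finset.sum_div, ← Finset.sum_mul, ← hS, hrb, hb]
    ring
end
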